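/- Fix real numbers t, r with 0 < t < 1, 0 < r < 1 and r² + t² = 1. Suppose the absolutely continuous part of ν with respect to Haar measure on 𝕋 is a nonzero measure and the topological support of ν has nonempty interior. Then for ℙ⁺-almost every ω ∈ Ω⁺ the unitary operator U⁺_ω has pure point spectrum with exponentially decaying eigenfunctions; that is, the closed linear span of the eigenvectors of U⁺_ω equals all of ℓ²(ℕ₀;ℂ), and for every eigenvector ψ of U⁺_ω there exist constants C > 0 and λ > 0 such that |⟨e_k, ψ⟩| ≤ C e^{−λ k} for all k ∈ ℕ₀. -/

import Mathlib

open MeasureTheory Complex Filter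

noncomputable section

instance : Fact (0 < 2 * Real.pi) := ⟨by positivity⟩

/-- The torus `𝕋 = ℝ/2πℤ`. -/
abbrev Torus : Type := AddCircle (2 * Real.pi)

/-- `ec a = e^{ia}` for `a ∈ 𝕋`. -/
def ec (a : Torus) : ℂ := (AddCircle.toCircle a : ℂ)

/-- The topological support of a measure. -/
def measSupport (ν : Measure Torus) : Set Torus := {x | ∀ s ∈ nhds x, 0 < ν s}

/-- `ℓ²(ℕ₀;ℂ)`. -/
abbrev Hn : Type := lp (fun _ : ℕ => ℂ) 2

/-- Canonical orthonormal basis of `ℓ²(ℕ₀;ℂ)`. -/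
def en (k : ℕ) : Hn := lp.single 2 k (1 : ℂ)

/-- Matrix entries of the half-lattice operator `S⁺`: `Spent t r k j = ⟨e_k, S⁺ e_j⟩`. -/
def Spent (t r : ℝ) (k j : ℕ) : ℂ :=
  if k = 0 then
    (if j = 0 then (-r : ℝ) else if j = 1 then (r*t : ℝ) else if j = 2 then (-t^2 : ℝ) else 0)
  else if k = 1 then
    (if j = 0 then (t : ℝ) else if j = 1 then (r^2 : ℝ) else if j = 2 then (-(r*t) : ℝ) else 0)
  else if k % 2 = 0 then
    (if j + 1 = k then (r*t : ℝ) else if j = k then (r^2 : ℝ)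
     else if j = k + 1 then (r*t : ℝ) else if j = k + 2 then (-t^2 : ℝ) else 0)
  else
    (if j + 2 = k then (-t^2 : ℝ) else if j + 1 = k then (-(r*t) : ℝ)
     else if j = k then (r^2 : ℝ) else if j = k + 1 then (-(r*t) : ℝ) else 0)


abbrev hm : Measure Torus := AddCircle.haarAddCircle

lemma ec_coe (x : ℝ) : ec (x : Torus) = Complex.exp (x * I) := by
  unfold ec
  rw [AddCircle.toCircle_apply_mk, Circle.coe_exp]
  congr 2
  push_cast
  have : (Real.pi : ℂ) ≠ 0 := by exact_mod_cast Real.pi_ne_zero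
  field_simp

lemma ec_add (x y : Torus) : ec (x + y) = ec x * ec y := by
  unfold ec; rw [AddCircle.toCircle_add]; simp

lemma ec_zero : ec 0 = 1 := by unfold ec; simp

lemma norm_ec (x : Torus) : ‖ec x‖ = 1 := Circle.norm_coe _

lemma ec_ne (x : Torus) : ec x ≠ 0 := by
  intro h; have := norm_ec x; rw [h] at this; simp at this

lemma ec_neg (x : Torus) : ec (-x) = (ec x)⁻¹ := by
  have := ec_add x (-x)
  rw [add_neg_cancel, ec_zero] at this
  exact eq_inv_of_mul_eq_one_right this.symm

lemma conj_ec (x : Torus) : (starRingEnd ℂ) (ec x) = (ec x)⁻¹ := by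
  rw [Complex.inv_def, Complex.normSq_eq_norm_sq, norm_ec]; simp

lemma continuous_ec : Continuous ec := by
  unfold ec
  exact continuous_subtype_val.comp (AddCircle.continuous_toCircle)

lemma ec_pi : ec ((Real.pi : ℝ) : Torus) = -1 := by
  rw [ec_coe, Complex.exp_pi_mul_I]

lemma one_sub_ne {r : ℝ} (h0 : 0 < r) (h1 : r < 1) {v : ℂ} (hv : ‖v‖ ≤ 1) : (1 : ℂ) - r * v ≠ 0 := by
  intro h
  have : (r : ℂ) * v = 1 := by linear_combination -h
  have h2 := congrArg norm this
  rw [norm_mul] at h2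
  simp [abs_of_pos h0] at h2
  nlinarith [norm_nonneg v]

lemma re_pos' {r : ℝ} (h0 : 0 < r) (h1 : r < 1) {v : ℂ} (hv : ‖v‖ ≤ 1) : 0 < ((1 : ℂ) - r * v).re := by
  simp
  have := (Complex.abs_re_le_norm v)
  nlinarith [abs_le.1 this]

def gg (t r : ℝ) (x : Torus) : ℝ := t / ‖1 - (r : ℂ) * ec x‖

def beta (r : ℝ) (x : Torus) : Torus := x + ((Real.pi - 2 * arg (1 - (r : ℂ) * ec x) : ℝ) : Torus)

lemma continuous_beta {r : ℝ} (h0 : 0 < r) (h1 : r < 1) : Continuous (beta r) := by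
  unfold beta
  refine continuous_id.add ((AddCircle.continuous_mk' _).comp ?_)
  refine continuous_const.sub (continuous_const.mul ?_)
  rw [continuous_iff_continuousAt]
  intro x
  refine ContinuousAt.comp (f := fun x => 1 - (r : ℂ) * ec x) (continuousAt_arg ?_) ?_
  · left; exact re_pos' h0 h1 (norm_ec x).le
  · exact (continuous_const.sub (continuous_const.mul continuous_ec)).continuousAt

lemma continuous_gg {t r : ℝ} (h0 : 0 < r) (h1 : r < 1) : Continuous (gg t r) := by
  unfold gg
  refine continuous_const.div (continuous_const.sub (continuous_const.mul continuous_ec)).norm ?_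
  intro x
  exact norm_ne_zero_iff.2 (one_sub_ne h0 h1 (norm_ec x).le)

lemma gg_pos {t r : ℝ} (ht : 0 < t) (h0 : 0 < r) (h1 : r < 1) (x : Torus) : 0 < gg t r x :=
  div_pos ht (norm_pos_iff.2 (one_sub_ne h0 h1 (norm_ec x).le))

lemma conj_div_self {w : ℂ} (hw : w ≠ 0) :
    Complex.exp (((-2 * arg w : ℝ) : ℂ) * I) = (starRingEnd ℂ) w / w := by
  have h := Complex.norm_mul_exp_arg_mul_I w
  have hc : (starRingEnd ℂ) w = ‖w‖ * Complex.exp (-(arg w * I)) := by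
    conv_lhs => rw [← h]
    rw [map_mul, Complex.conj_ofReal, ← Complex.exp_conj]
    simp
  have hn : (‖w‖ : ℂ) ≠ 0 := by simpa using hw
  rw [hc, eq_div_iff hw]
  calc _ = Complex.exp (((-2 * arg w : ℝ) : ℂ) * I) * (‖w‖ * Complex.exp (arg w * I)) := by rw [h]
    _ = _ := by
      rw [mul_left_comm, ← Complex.exp_add]
      congr 2; push_cast; ring

lemma ec_beta {r : ℝ} (h0 : 0 < r) (h1 : r < 1) (x : Torus) :
    ec (beta r x) = -(ec x - r) / (1 - r * ec x) := by
  have hw := one_sub_ne h0 h1 (norm_ec x).le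
  unfold beta
  rw [ec_add, sub_eq_add_neg, show ((Real.pi + -(2 * arg (1 - (r:ℂ) * ec x)) : ℝ) : Torus)
    = ((Real.pi : ℝ) : Torus) + ((-2 * arg (1 - (r:ℂ) * ec x) : ℝ) : Torus) by
      rw [← AddCircle.coe_add]; congr 1; ring, ec_add, ec_pi, ec_coe, conj_div_self hw]
  simp only [map_sub, map_one, map_mul, Complex.conj_ofReal, conj_ec]
  have := ec_ne x
  field_simp

/-- real lift -/
def psi (r : ℝ) (x : ℝ) : ℝ := x + (Real.pi - 2 * (Complex.log (1 - (r : ℂ) * Complex.exp (x * I))).im)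

lemma beta_coe (r : ℝ) (x : ℝ) : beta r (x : Torus) = ((psi r x : ℝ) : Torus) := by
  unfold beta psi
  rw [ec_coe, Complex.log_im, AddCircle.coe_add]

lemma hasDerivAt_psi {t r : ℝ} (h0 : 0 < r) (h1 : r < 1) (hrt : r^2 + t^2 = 1) (x : ℝ) :
    HasDerivAt (psi r) (gg t r (x : Torus) ^ 2) x := by
  have hn : ‖Complex.exp (x * I)‖ ≤ 1 := (Complex.norm_exp_ofReal_mul_I x).le
  have hw := one_sub_ne h0 h1 hn
  have hsl : (1 - (r : ℂ) * Complex.exp (x * I)) ∈ slitPlane := Or.inl (re_pos' h0 h1 hn)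
  have e1 : HasDerivAt (fun y : ℝ => Complex.exp (y * I)) (Complex.exp (x * I) * I) x := by
    have := ((Complex.ofRealCLM.hasDerivAt (x := x)).mul_const I).cexp
    simpa using this
  have e2 : HasDerivAt (fun y : ℝ => 1 - (r : ℂ) * Complex.exp (y * I))
      (-(r * (Complex.exp (x * I) * I))) x := by
    simpa using (e1.const_mul (r : ℂ)).const_sub 1
  have e3 := e2.clog_real hsl
  have e4 := (Complex.imCLM.hasFDerivAt.comp_hasDerivAt x e3)
  have e5 := (hasDerivAt_id x).add ((e4.const_mul 2).const_sub Real.pi)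
  refine e5.congr_deriv ?_
  unfold gg
  rw [ec_coe, div_pow, ← Complex.normSq_eq_norm_sq]
  set w := Complex.exp (x * I) with hwdef
  have hns : Complex.normSq w = 1 := by
    rw [Complex.normSq_eq_norm_sq, hwdef, Complex.norm_exp_ofReal_mul_I]; norm_num
  have hns2 : Complex.normSq (1 - r * w) ≠ 0 := by simpa [Complex.normSq_eq_zero] using hw
  simp only [Complex.imCLM_apply, Complex.div_im]
  field_simp
  simp [Complex.normSq_apply] at hns hns2 ⊢
  linear_combination (-r^2) * hns - hrt

lemma continuous_lift_gg {t r : ℝ} (h0 : 0 < r) (h1 : r < 1) :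
    Continuous (fun x : ℝ => gg t r (x : Torus) ^ 2) :=
  ((continuous_gg h0 h1).comp (AddCircle.continuous_mk' _)).pow 2

lemma hm_integral {E : Type*} [NormedAddCommGroup E] [NormedSpace ℝ E] (f : Torus → E) :
    ∫ x, f x ∂hm = (2 * Real.pi)⁻¹ • ∫ x in (0:ℝ)..(2 * Real.pi), f (x : Torus) := by
  rw [hm, AddCircle.integral_haarAddCircle, ← AddCircle.intervalIntegral_preimage (2 * Real.pi) 0, zero_add]

lemma integral_beta {t r : ℝ} (h0 : 0 < r) (h1 : r < 1) (hrt : r^2 + t^2 = 1)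
    (f : Torus → ℝ) (hf : Continuous f) :
    ∫ x, f (beta r x) * gg t r x ^ 2 ∂hm = ∫ x, f x ∂hm := by
  rw [hm_integral, hm_integral]
  congr 1
  have h := intervalIntegral.integral_comp_mul_deriv (a := 0) (b := 2 * Real.pi) (f := psi r)
    (f' := fun x : ℝ => gg t r (x : Torus) ^ 2) (g := fun x : ℝ => f (x : Torus))
    (fun x _ => hasDerivAt_psi h0 h1 hrt x) (continuous_lift_gg h0 h1).continuousOn
    (hf.comp (AddCircle.continuous_mk' _))
  simp only [Function.comp] at h
  simp only [beta_coe]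
  rw [h]
  have hp : psi r (2 * Real.pi) = psi r 0 + 2 * Real.pi := by
    unfold psi
    have : Complex.exp (((2 * Real.pi : ℝ) : ℂ) * I) = 1 := by
      push_cast; exact Complex.exp_two_pi_mul_I
    rw [this]; simp; ring
  rw [hp]
  have hper : Function.Periodic (fun x : ℝ => f (x : Torus)) (2 * Real.pi) := by
    intro x; simp only []
    congr 1
    simp
  have := hper.intervalIntegral_add_eq (psi r 0) 0
  simpa using this

lemma measurable_ofReal_gg {t r : ℝ} (h0 : 0 < r) (h1 : r < 1) :
    Measurable (fun x => ENNReal.ofReal (gg t r x)) :=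
  (continuous_gg h0 h1).measurable.ennreal_ofReal

lemma gg_le {t r : ℝ} (ht : 0 < t) (h0 : 0 < r) (h1 : r < 1) (x : Torus) : gg t r x ≤ t / (1 - r) := by
  unfold gg
  apply div_le_div_of_nonneg_left ht.le (by linarith)
  have := norm_sub_norm_le (1 : ℂ) (r * ec x)
  rw [norm_mul, norm_ec] at this
  simp [abs_of_pos h0] at this
  linarith

lemma gg_ge {t r : ℝ} (ht : 0 < t) (h0 : 0 < r) (h1 : r < 1) (x : Torus) : t / (1 + r) ≤ gg t r x := by
  unfold gg
  apply div_le_div_of_nonneg_left ht.le (norm_pos_iff.2 (one_sub_ne h0 h1 (norm_ec x).le))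
  have := norm_sub_le (1 : ℂ) (r * ec x)
  rw [norm_mul, norm_ec] at this
  simp [abs_of_pos h0] at this
  linarith

lemma map_beta {t r : ℝ} (ht : 0 < t) (h0 : 0 < r) (h1 : r < 1) (hrt : r^2 + t^2 = 1) :
    Measure.map (beta r) (hm.withDensity (fun x => ENNReal.ofReal (gg t r x ^ 2))) = hm := by
  have hb := continuous_beta h0 h1
  have hmeas : Measurable (fun x => ENNReal.ofReal (gg t r x ^ 2)) :=
    ((continuous_gg h0 h1).pow 2).measurable.ennreal_ofReal
  have hfin : IsFiniteMeasure (hm.withDensity (fun x => ENNReal.ofReal (gg t r x ^ 2))) := by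
    apply isFiniteMeasure_withDensity_ofReal
    exact (((continuous_gg h0 h1).pow 2).integrable_of_hasCompactSupport
      (HasCompactSupport.of_compactSpace _)).2
  apply ext_of_forall_integral_eq_of_IsFiniteMeasure
  intro f
  rw [integral_map hb.measurable.aemeasurable f.continuous.aestronglyMeasurable,
    integral_withDensity_eq_integral_toReal_smul hmeas (by simp)]
  rw [← integral_beta h0 h1 hrt f f.continuous]
  congr 1; ext x
  rw [ENNReal.toReal_ofReal (by positivity), smul_eq_mul, mul_comm]

lemma lintegral_beta {t r : ℝ} (ht : 0 < t) (h0 : 0 < r) (h1 : r < 1) (hrt : r^2 + t^2 = 1)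
    (f : Torus → ENNReal) (hf : Measurable f) :
    ∫⁻ x, ENNReal.ofReal (gg t r x ^ 2) * f (beta r x) ∂hm = ∫⁻ x, f x ∂hm := by
  have hmeas : Measurable (fun x => ENNReal.ofReal (gg t r x ^ 2)) :=
    ((continuous_gg h0 h1).pow 2).measurable.ennreal_ofReal
  conv_rhs => rw [← map_beta ht h0 h1 hrt]
  rw [lintegral_map hf (continuous_beta h0 h1).measurable,
    lintegral_withDensity_eq_lintegral_mul (g := fun a => f (beta r a)) _ hmeas (hf.comp (continuous_beta h0 h1).measurable)]
  rfl



def uu (r : ℝ) (η : ℕ → ℂ) : ℕ → ℂ → ℂ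
  | 0, _ => -η 0
  | n+1, z => η (n+1) * (-(z * uu r η n z - r) / (1 - r * (z * uu r η n z)))

def DD (t r : ℝ) (η : ℕ → ℂ) : ℕ → ℂ → ℂ
  | 0, _ => 1
  | n+1, z => DD t r η n z * ((1 - r * (z * uu r η n z)) / t)

lemma moebius_norm_le {r : ℝ} (h0 : 0 < r) (h1 : r < 1) {v : ℂ} (hv : ‖v‖ ≤ 1) :
    ‖-(v - r) / (1 - r * v)‖ ≤ 1 := by
  rw [norm_div, norm_neg, div_le_one (norm_pos_iff.2 (one_sub_ne h0 h1 hv))]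
  rw [← sq_le_sq₀ (norm_nonneg _) (norm_nonneg _)]
  rw [← Complex.normSq_eq_norm_sq, ← Complex.normSq_eq_norm_sq]
  have h2 : Complex.normSq v ≤ 1 := by
    rw [Complex.normSq_eq_norm_sq]; nlinarith [norm_nonneg v]
  simp [Complex.normSq_apply] at h2 ⊢
  nlinarith [mul_nonneg (sub_nonneg.2 h2) (show 0 ≤ 1 - r^2 by nlinarith)]

lemma norm_uu_le {r : ℝ} (h0 : 0 < r) (h1 : r < 1) {η : ℕ → ℂ} (hη : ∀ k, ‖η k‖ = 1) (n : ℕ) :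
    ∀ z : ℂ, ‖z‖ ≤ 1 → ‖uu r η n z‖ ≤ 1 := by
  induction n with
  | zero => intro z _; simp [uu, hη]
  | succ n ih =>
    intro z hz
    simp only [uu]
    rw [norm_mul, hη, one_mul]
    apply moebius_norm_le h0 h1
    rw [norm_mul]
    exact mul_le_one₀ hz (norm_nonneg _) (ih z hz)

lemma norm_v_le {r : ℝ} (h0 : 0 < r) (h1 : r < 1) {η : ℕ → ℂ} (hη : ∀ k, ‖η k‖ = 1) (n : ℕ)
    {z : ℂ} (hz : ‖z‖ ≤ 1) : ‖z * uu r η n z‖ ≤ 1 := by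
  rw [norm_mul]
  exact mul_le_one₀ hz (norm_nonneg _) (norm_uu_le h0 h1 hη n z hz)

lemma den_ne {r : ℝ} (h0 : 0 < r) (h1 : r < 1) {η : ℕ → ℂ} (hη : ∀ k, ‖η k‖ = 1) (n : ℕ)
    {z : ℂ} (hz : ‖z‖ ≤ 1) : 1 - r * (z * uu r η n z) ≠ 0 :=
  one_sub_ne h0 h1 (norm_v_le h0 h1 hη n hz)

lemma DD_ne {t r : ℝ} (ht : 0 < t) (h0 : 0 < r) (h1 : r < 1) {η : ℕ → ℂ} (hη : ∀ k, ‖η k‖ = 1) (n : ℕ)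
    {z : ℂ} (hz : ‖z‖ ≤ 1) : DD t r η n z ≠ 0 := by
  induction n with
  | zero => simp [DD]
  | succ n ih =>
    simp only [DD]
    exact mul_ne_zero ih (div_ne_zero (den_ne h0 h1 hη n hz) (by exact_mod_cast ht.ne'))

abbrev UB : Set ℂ := Metric.ball 0 1

lemma UB_cl {z : ℂ} (h : z ∈ closure UB) : ‖z‖ ≤ 1 := by
  rw [closure_ball _ one_ne_zero] at h
  simpa using h

lemma dc_mul {f g : ℂ → ℂ} (hf : DiffContOnCl ℂ f UB) (hg : DiffContOnCl ℂ g UB) :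
    DiffContOnCl ℂ (fun z => f z * g z) UB := hf.smul hg

lemma dc_id : DiffContOnCl ℂ (fun z : ℂ => z) UB := differentiable_id.diffContOnCl

lemma dc_pow {f : ℂ → ℂ} (hf : DiffContOnCl ℂ f UB) (n : ℕ) : DiffContOnCl ℂ (fun z => f z ^ n) UB :=
  ⟨hf.1.pow n, hf.2.pow n⟩

lemma dc_uu {r : ℝ} (h0 : 0 < r) (h1 : r < 1) {η : ℕ → ℂ} (hη : ∀ k, ‖η k‖ = 1) (n : ℕ) :
    DiffContOnCl ℂ (uu r η n) UB := by
  induction n with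
  | zero => exact diffContOnCl_const
  | succ n ih =>
    have hv := dc_mul dc_id ih
    have hd : DiffContOnCl ℂ (fun z => 1 - r * (z * uu r η n z)) UB :=
      diffContOnCl_const.sub (dc_mul diffContOnCl_const hv)
    have hi := hd.inv (fun z hz => den_ne h0 h1 hη n (UB_cl hz))
    have := dc_mul (f := fun _ => η (n+1)) diffContOnCl_const (dc_mul (hv.sub_const (r:ℂ)).neg hi)
    exact this

lemma dc_den {r : ℝ} (h0 : 0 < r) (h1 : r < 1) {η : ℕ → ℂ} (hη : ∀ k, ‖η k‖ = 1) (n : ℕ) :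
    DiffContOnCl ℂ (fun z => 1 - r * (z * uu r η n z)) UB :=
  diffContOnCl_const.sub (dc_mul diffContOnCl_const (dc_mul dc_id (dc_uu h0 h1 hη n)))

lemma dc_DD {t r : ℝ} (h0 : 0 < r) (h1 : r < 1) {η : ℕ → ℂ} (hη : ∀ k, ‖η k‖ = 1) (n : ℕ) :
    DiffContOnCl ℂ (DD t r η n) UB := by
  induction n with
  | zero => exact diffContOnCl_const
  | succ n ih =>
    exact dc_mul ih (dc_mul (dc_den h0 h1 hη n) (g := fun _ => (t:ℂ)⁻¹) diffContOnCl_const)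

lemma mean_value {F : ℂ → ℂ} (hF : DiffContOnCl ℂ F UB) : ∫ x : Torus, F (ec x) ∂hm = F 0 := by
  have h := DiffContOnCl.circleAverage (f := F) (c := 0) (R := 1) (by simpa using hF)
  rw [hm_integral, ← h, Real.circleAverage]
  congr 1
  apply intervalIntegral.integral_congr
  intro x _
  simp only [ec_coe, circleMap]
  simp

lemma cont_circle {F : ℂ → ℂ} (hF : DiffContOnCl ℂ F UB) : Continuous (fun x : Torus => F (ec x)) := by
  apply hF.2.comp_continuous continuous_ec
  intro x
  rw [closure_ball _ one_ne_zero]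
  simp [norm_ec]

lemma int_of_cont {E : Type*} [NormedAddCommGroup E] {f : Torus → E} (hf : Continuous f) :
    Integrable f hm := hf.integrable_of_hasCompactSupport (HasCompactSupport.of_compactSpace _)

lemma norm_uu_eq {r : ℝ} (h0 : 0 < r) (h1 : r < 1) {η : ℕ → ℂ} (hη : ∀ k, ‖η k‖ = 1) (n : ℕ)
    {z : ℂ} (hz : ‖z‖ = 1) : ‖uu r η n z‖ = 1 := by
  induction n with
  | zero => simp [uu, hη]
  | succ n ih =>
    simp only [uu]
    rw [norm_mul, hη, one_mul, norm_div, norm_neg,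
      div_eq_one_iff_eq (norm_ne_zero_iff.2 (den_ne h0 h1 hη n hz.le))]
    have h2 : ‖z * uu r η n z‖ = 1 := by rw [norm_mul, hz, ih, one_mul]
    generalize z * uu r η n z = v at h2
    rw [← sq_eq_sq₀ (norm_nonneg _) (norm_nonneg _),
      ← Complex.normSq_eq_norm_sq, ← Complex.normSq_eq_norm_sq]
    have h3 : Complex.normSq v = 1 := by rw [Complex.normSq_eq_norm_sq, h2]; norm_num
    simp [Complex.normSq_apply] at h3 ⊢
    linear_combination (1-r^2) * h3

def cc (η : ℕ → ℂ) : ℕ → ℂ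
  | 0 => -η 0
  | n+1 => -η (n+1) * cc η n

lemma cc_norm {η : ℕ → ℂ} (hη : ∀ k, ‖η k‖ = 1) (n : ℕ) : ‖cc η n‖ = 1 := by
  induction n with
  | zero => simp [cc, hη]
  | succ n ih => simp [cc, hη, ih]

lemma conj_of_norm_one {v : ℂ} (hv : ‖v‖ = 1) : (starRingEnd ℂ) v = v⁻¹ := by
  rw [Complex.inv_def, Complex.normSq_eq_norm_sq, hv]; simp

lemma uD_eq {t r : ℝ} (h0 : 0 < r) (h1 : r < 1) {η : ℕ → ℂ} (hη : ∀ k, ‖η k‖ = 1) (n : ℕ)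
    {z : ℂ} (hz : ‖z‖ = 1) :
    uu r η n z * DD t r η n z = cc η n * z ^ n * (starRingEnd ℂ) (DD t r η n z) := by
  induction n with
  | zero => simp [uu, DD, cc]
  | succ n ih =>
    have hd := den_ne h0 h1 hη n hz.le
    have h2 : ‖z * uu r η n z‖ = 1 := by rw [norm_mul, hz, norm_uu_eq h0 h1 hη n hz, one_mul]
    simp only [uu, DD, cc, map_mul, map_div₀, map_sub, map_one, Complex.conj_ofReal]
    have h3 := conj_of_norm_one h2
    rw [map_mul] at h3
    rw [h3]
    have h4 : z * uu r η n z ≠ 0 := by rw [← norm_pos_iff, h2]; norm_num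
    set v := z * uu r η n z with hv
    have h5 : cc η n * z ^ n * (starRingEnd ℂ) (DD t r η n z) * z = v * DD t r η n z := by
      rw [← ih, hv]; ring
    calc η (n + 1) * (-(v - ↑r) / (1 - ↑r * v)) * (DD t r η n z * ((1 - ↑r * v) / ↑t))
        = -η (n+1) * (v - r) * DD t r η n z / t * ((1 - ↑r * v) / (1 - ↑r * v)) := by ring
      _ = -η (n+1) * (v - r) * DD t r η n z / t := by rw [div_self hd, mul_one]
      _ = -η (n+1) * (v * DD t r η n z) * ((1 - r * v⁻¹) / t) := by field_simp
      _ = _ := by rw [← h5]; ring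

lemma poisson_id {t r : ℝ} (h0 : 0 < r) (h1 : r < 1) (hrt : r^2 + t^2 = 1) {v : ℂ} (hv : ‖v‖ = 1) :
    (t:ℂ)^2 / ((1 - r * v) * (1 - r * v⁻¹)) = 1 + r * v / (1 - r * v) + r * v⁻¹ / (1 - r * v⁻¹) := by
  have hd := one_sub_ne h0 h1 hv.le
  have hd2 : 1 - r * v⁻¹ ≠ 0 := one_sub_ne h0 h1 (by rw [norm_inv, hv]; norm_num)
  have hv0 : v ≠ 0 := by rw [← norm_pos_iff, hv]; norm_num
  have hc : (r:ℂ)^2 + (t:ℂ)^2 = 1 := by exact_mod_cast hrt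
  field_simp
  have hd3 : v - r ≠ 0 := by
    intro h; apply hd2; rw [sub_eq_zero.1 h] at hv0 ⊢; field_simp; simp
  field_simp
  linear_combination v * hc



local notation "cj" => starRingEnd ℂ

/-- inverse squared norm weight -/
def ww (t r : ℝ) (η : ℕ → ℂ) (n : ℕ) (z : ℂ) : ℂ := (DD t r η n z * (starRingEnd ℂ) (DD t r η n z))⁻¹

lemma ww_eq {t r : ℝ} (ht : 0 < t) (h0 : 0 < r) (h1 : r < 1) {η : ℕ → ℂ} (hη : ∀ k, ‖η k‖ = 1) (n : ℕ)
    {z : ℂ} (hz : ‖z‖ = 1) :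
    ww t r η n z * uu r η n z = cc η n * z ^ n / (DD t r η n z)^2 := by
  have hD := DD_ne ht h0 h1 hη n hz.le
  have hD' : cj (DD t r η n z) ≠ 0 := by simpa using hD
  have h := uD_eq (t := t) h0 h1 hη n hz
  unfold ww
  field_simp
  linear_combination h

lemma ww_succ {t r : ℝ} (ht : 0 < t) (h0 : 0 < r) (h1 : r < 1) (hrt : r^2 + t^2 = 1)
    {η : ℕ → ℂ} (hη : ∀ k, ‖η k‖ = 1) (n : ℕ) {z : ℂ} (hz : ‖z‖ = 1) :
    ww t r η (n+1) z = ww t r η n z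
      + r * z * (ww t r η n z * uu r η n z) / (1 - r * (z * uu r η n z))
      + cj (r * z * (ww t r η n z * uu r η n z) / (1 - r * (z * uu r η n z))) := by
  have h2 : ‖z * uu r η n z‖ = 1 := by rw [norm_mul, hz, norm_uu_eq h0 h1 hη n hz, one_mul]
  have h3 := conj_of_norm_one h2
  have hp := poisson_id h0 h1 hrt h2
  have hD := DD_ne ht h0 h1 hη n hz.le
  have hD' : cj (DD t r η n z) ≠ 0 := by simpa using hD
  have hw : cj (ww t r η n z) = ww t r η n z := by
    unfold ww; simp [mul_comm]
  have e1 : ww t r η (n+1) z = ww t r η n z * (t^2 / ((1 - r * (z * uu r η n z)) * (1 - r * (z * uu r η n z)⁻¹))) := by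
    unfold ww
    simp only [DD, map_mul (starRingEnd ℂ) (DD t r η n z), map_div₀, map_sub, map_one, Complex.conj_ofReal]
    rw [map_mul (starRingEnd ℂ) (r:ℂ), h3, Complex.conj_ofReal]
    have ht' : (t:ℂ) ≠ 0 := by exact_mod_cast ht.ne'
    generalize (1 - r * (z * uu r η n z)) = A
    generalize (1 - r * (z * uu r η n z)⁻¹) = B
    field_simp
  have e2 : r * z * (ww t r η n z * uu r η n z) / (1 - r * (z * uu r η n z))
     = ww t r η n z * (r * (z * uu r η n z) / (1 - r * (z * uu r η n z))) := by ring
  rw [e1, hp, e2, map_mul, hw, map_div₀, map_sub, map_mul (starRingEnd ℂ) (r:ℂ), h3, Complex.conj_ofReal, map_one]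
  ring

lemma cont_DD {t r : ℝ} (h0 : 0 < r) (h1 : r < 1) {η : ℕ → ℂ} (hη : ∀ k, ‖η k‖ = 1) (n : ℕ) :
    Continuous (fun x : Torus => DD t r η n (ec x)) := cont_circle (dc_DD h0 h1 hη n)

lemma cont_ww {t r : ℝ} (ht : 0 < t) (h0 : 0 < r) (h1 : r < 1) {η : ℕ → ℂ} (hη : ∀ k, ‖η k‖ = 1) (n : ℕ) :
    Continuous (fun x : Torus => ww t r η n (ec x)) := by
  unfold ww
  have h := cont_DD (t := t) h0 h1 hη n
  refine (h.mul (Complex.continuous_conj.comp h)).inv₀ ?_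
  intro x
  have := DD_ne ht h0 h1 hη n (norm_ec x).le
  simpa using this

lemma ii_step {t r : ℝ} (ht : 0 < t) (h0 : 0 < r) (h1 : r < 1) (hrt : r^2 + t^2 = 1)
    {η : ℕ → ℂ} (hη : ∀ k, ‖η k‖ = 1) {l j n : ℕ} (hlj : l ≤ j) (hjn : j ≤ n) :
    ∫ x : Torus, ((ec x)⁻¹)^l * DD t r η j (ec x) * ww t r η (n+1) (ec x) ∂hm =
    ∫ x : Torus, ((ec x)⁻¹)^l * DD t r η j (ec x) * ww t r η n (ec x) ∂hm := by
  set B : ℂ → ℂ := fun z => z * (z^(n-l) * ((cc η n * r) * (DD t r η j z *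
    ((DD t r η n z)^2 * (1 - r * (z * uu r η n z)))⁻¹))) with hB
  set A : ℂ → ℂ := fun z => z * (z^(n+l-j) * ((cc η n * r * (cc η j)⁻¹) * (uu r η j z * (DD t r η j z *
    ((DD t r η n z)^2 * (1 - r * (z * uu r η n z)))⁻¹)))) with hA
  have hdi : DiffContOnCl ℂ (fun z => DD t r η j z *
    ((DD t r η n z)^2 * (1 - r * (z * uu r η n z)))⁻¹) UB :=
    dc_mul (dc_DD h0 h1 hη j) ((dc_mul (dc_pow (dc_DD h0 h1 hη n) 2) (dc_den h0 h1 hη n)).inv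
      (fun z hz => mul_ne_zero (pow_ne_zero _ (DD_ne ht h0 h1 hη n (UB_cl hz))) (den_ne h0 h1 hη n (UB_cl hz))))
  have dB : DiffContOnCl ℂ B UB :=
    dc_mul dc_id (dc_mul (dc_pow dc_id _) (dc_mul diffContOnCl_const hdi))
  have dA : DiffContOnCl ℂ A UB :=
    dc_mul dc_id (dc_mul (dc_pow dc_id _) (dc_mul diffContOnCl_const (dc_mul (dc_uu h0 h1 hη j) hdi)))
  have iB := mean_value dB
  have iA := mean_value dA
  have key : ∀ x : Torus, ((ec x)⁻¹)^l * DD t r η j (ec x) * ww t r η (n+1) (ec x) =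
     ((ec x)⁻¹)^l * DD t r η j (ec x) * ww t r η n (ec x) + (B (ec x) + cj (A (ec x))) := by
    intro x
    have hz := norm_ec x
    have hz0 := ec_ne x
    generalize ec x = z at hz hz0
    have hcj : cj z = z⁻¹ := conj_of_norm_one hz
    have hD := DD_ne ht h0 h1 hη n hz.le
    have hd := den_ne h0 h1 hη n hz.le
    have hcz : cc η j ≠ 0 := by rw [← norm_pos_iff, cc_norm hη]; norm_num
    rw [ww_succ ht h0 h1 hrt hη n hz, ww_eq ht h0 h1 hη n hz]
    have eB : (z⁻¹)^l * DD t r η j z * (r * z * (cc η n * z ^ n / (DD t r η n z)^2) / (1 - r * (z * uu r η n z))) = B z := by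
      have : z^n = z^(n-l) * z^l := by rw [← pow_add]; congr 1; omega
      simp only [hB]
      rw [this, inv_pow]
      generalize (1 - r * (z * uu r η n z)) = d at hd
      field_simp
    have eA : z^l * cj (DD t r η j z) * (r * z * (cc η n * z ^ n / (DD t r η n z)^2) / (1 - r * (z * uu r η n z))) = A z := by
      have h5 : cj (DD t r η j z) = uu r η j z * DD t r η j z * (cc η j)⁻¹ * (z^j)⁻¹ := by
        rw [uD_eq (t := t) h0 h1 hη j hz]; field_simp
      have : z^l * z^n = z^(n+l-j) * z^j := by rw [← pow_add, ← pow_add]; congr 1; omega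
      simp only [hA]
      rw [h5]
      generalize (1 - r * (z * uu r η n z)) = d at hd
      field_simp
      linear_combination (uu r η j z * DD t r η j z * r * cc η n) * this
    rw [← eA, ← eB]
    rw [map_mul (starRingEnd ℂ) (z^l * _), map_mul (starRingEnd ℂ) (z^l), Complex.conj_conj, map_pow, hcj]
    ring
  have cB := int_of_cont (cont_circle dB)
  have cA : Integrable (fun x : Torus => cj (A (ec x))) hm := int_of_cont (Complex.continuous_conj.comp (cont_circle dA))
  have cAB : Integrable (fun x : Torus => B (ec x) + cj (A (ec x))) hm := cB.add cA
  have c1 : Integrable (fun x : Torus => ((ec x)⁻¹)^l * DD t r η j (ec x) * ww t r η n (ec x)) hm :=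
    int_of_cont ((((continuous_ec.inv₀ ec_ne).pow l).mul (cont_DD h0 h1 hη j)).mul (cont_ww ht h0 h1 hη n))
  rw [integral_congr_ae (Eventually.of_forall key), integral_add c1 cAB, integral_add cB cA, iB]
  have : ∫ x : Torus, cj (A (ec x)) ∂hm = cj (∫ x : Torus, A (ec x) ∂hm) := integral_conj
  rw [this, iA]
  simp [hA, hB]

lemma ii_base {t r : ℝ} (ht : 0 < t) (h0 : 0 < r) (h1 : r < 1)
    {η : ℕ → ℂ} (hη : ∀ k, ‖η k‖ = 1) (l j : ℕ) :
    ∫ x : Torus, ((ec x)⁻¹)^l * DD t r η j (ec x) * ww t r η j (ec x) ∂hm =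
      cj (0^l * (DD t r η j 0)⁻¹) := by
  have hd : DiffContOnCl ℂ (fun z => z^l * (DD t r η j z)⁻¹) UB :=
    dc_mul (dc_pow dc_id l) ((dc_DD h0 h1 hη j).inv (fun z hz => DD_ne ht h0 h1 hη j (UB_cl hz)))
  rw [← mean_value hd, ← integral_conj]
  apply integral_congr_ae
  refine Eventually.of_forall (fun x => ?_)
  have := DD_ne ht h0 h1 hη j (norm_ec x).le
  simp only [map_mul, map_pow, conj_ec, map_inv₀, ww]
  field_simp

lemma ii_all {t r : ℝ} (ht : 0 < t) (h0 : 0 < r) (h1 : r < 1) (hrt : r^2 + t^2 = 1)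
    {η : ℕ → ℂ} (hη : ∀ k, ‖η k‖ = 1) {l j n : ℕ} (hlj : l ≤ j) (hjn : j ≤ n) :
    ∫ x : Torus, ((ec x)⁻¹)^l * DD t r η j (ec x) * ww t r η n (ec x) ∂hm =
      cj (0^l * (DD t r η j 0)⁻¹) := by
  induction n, hjn using Nat.le_induction with
  | base => exact ii_base ht h0 h1 hη l j
  | succ n hn ih => rw [ii_step ht h0 h1 hrt hη hlj hn, ih]

lemma ww_norm {t r : ℝ} {η : ℕ → ℂ} (n : ℕ) (z : ℂ) : ww t r η n z = (((‖DD t r η n z‖^2)⁻¹ : ℝ) : ℂ) := by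
  unfold ww
  rw [Complex.mul_conj, Complex.normSq_eq_norm_sq]
  push_cast; rfl




def rowS (t r : ℝ) (k : ℕ) (x : ℕ → ℂ) : ℂ := ∑ j ∈ Finset.range (k+3), Spent t r k j * x j

def Ye (t r : ℝ) (x : ℕ → ℂ) : ℕ → ℂ
  | 0 => - x 0
  | k+1 => t * x (2*k+1) + r * x (2*k+2)

def Yo (t r : ℝ) (x : ℕ → ℂ) (k : ℕ) : ℂ := r * x (2*k+1) - t * x (2*k+2)

lemma rowS_even (t r : ℝ) (k : ℕ) (x : ℕ → ℂ) :
    rowS t r (2*k) x = r * Ye t r x k + t * Yo t r x k := by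
  cases k with
  | zero => simp [rowS, Finset.sum_range_succ, Spent, Ye, Yo]; ring
  | succ k =>
    unfold rowS
    rw [show 2*(k+1)+3 = 2*k+1+1+1+1+1 by ring, Finset.sum_range_succ, Finset.sum_range_succ,
      Finset.sum_range_succ, Finset.sum_range_succ, Finset.sum_eq_zero]
    · simp only [Ye, Yo, Spent]
      rw [show 2*(k+1)+1 = 2*k+3 by ring, show 2*(k+1)+2 = 2*k+4 by ring]
      rw [show 2*(k+1) = 2*k+2 by ring]
      simp [show (2*k+2) % 2 = 0 by omega]
      ring
    · intro j hj
      have := Finset.mem_range.1 hj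
      simp [Spent, show (2*(k+1)) % 2 = 0 by omega, show 2*(k+1) ≠ 1 by omega, show j + 1 ≠ 2*(k+1) by omega,
        show j ≠ 2*(k+1) by omega, show j ≠ 2*(k+1)+1 by omega, show j ≠ 2*(k+1)+2 by omega]

lemma rowS_odd (t r : ℝ) (k : ℕ) (x : ℕ → ℂ) :
    rowS t r (2*k+1) x = -t * Ye t r x k + r * Yo t r x k := by
  cases k with
  | zero => simp [rowS, Finset.sum_range_succ, Spent, Ye, Yo]; ring
  | succ k =>
    unfold rowS
    rw [show 2*(k+1)+1+3 = 2*k+1+1+1+1+1+1 by ring, Finset.sum_range_succ, Finset.sum_range_succ,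
      Finset.sum_range_succ, Finset.sum_range_succ, Finset.sum_range_succ, Finset.sum_eq_zero]
    · simp only [Ye, Yo, Spent]
      rw [show 2*(k+1)+1 = 2*k+3 by ring, show 2*(k+1)+2 = 2*k+4 by ring]
      simp [show (2*k+3) % 2 = 1 by omega]
      ring
    · intro j hj
      have := Finset.mem_range.1 hj
      simp [Spent, show (2*(k+1)+1) % 2 = 1 by omega, show j + 2 ≠ 2*(k+1)+1 by omega, show j + 1 ≠ 2*(k+1)+1 by omega,
        show j ≠ 2*(k+1) by omega, show j ≠ 2*(k+1)+1 by omega, show j ≠ 2*(k+1)+2 by omega]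

lemma Spent_far (t r : ℝ) {k j : ℕ} (h : k + 3 ≤ j) : Spent t r k j = 0 := by
  unfold Spent
  split_ifs <;> first | rfl | omega

def ss (η : ℕ → ℂ) : ℕ → ℂ
  | 0 => 1
  | k+1 => - ss η k * (η (2*k+1))⁻¹

lemma ss_norm {η : ℕ → ℂ} (hη : ∀ k, ‖η k‖ = 1) (n : ℕ) : ‖ss η n‖ = 1 := by
  induction n with
  | zero => simp [ss]
  | succ n ih => simp [ss, hη, ih]

def pp (t r : ℝ) (η : ℕ → ℂ) (n : ℕ) (z : ℂ) : ℂ :=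
  if n % 2 = 1 then - ss η (n/2+1) * (z⁻¹)^(n/2+1) * DD t r η n z
  else - ss η (n/2) * (η n)⁻¹ * (z⁻¹)^(n/2) * (uu r η n z * DD t r η n z)

lemma pp_odd (t r : ℝ) (η : ℕ → ℂ) (k : ℕ) (z : ℂ) :
    pp t r η (2*k+1) z = - ss η (k+1) * (z⁻¹)^(k+1) * DD t r η (2*k+1) z := by
  unfold pp
  rw [if_pos (by omega), show (2*k+1)/2 = k by omega]

lemma pp_even (t r : ℝ) (η : ℕ → ℂ) (k : ℕ) (z : ℂ) :
    pp t r η (2*k) z = - ss η k * (η (2*k))⁻¹ * (z⁻¹)^k * (uu r η (2*k) z * DD t r η (2*k) z) := by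
  unfold pp
  rw [if_neg (by omega), show (2*k)/2 = k by omega]

section
variable {t r : ℝ} (ht : 0 < t) (h0 : 0 < r) (h1 : r < 1) (hrt : r^2 + t^2 = 1)
    {η : ℕ → ℂ} (hη : ∀ k, ‖η k‖ = 1)
include ht h0 h1 hrt hη

lemma eta_ne (k : ℕ) : η k ≠ 0 := by rw [← norm_pos_iff, hη]; norm_num

lemma pp_step {z : ℂ} (hz : ‖z‖ = 1) (k : ℕ) :
    pp t r η (2*k+2) z = - pp t r η (2*k+1) z * (z * uu r η (2*k+1) z - r) / t := by
  have hd := den_ne h0 h1 hη (2*k+1) hz.le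
  have ht' : (t:ℂ) ≠ 0 := by exact_mod_cast ht.ne'
  have he := eta_ne ht h0 h1 hrt hη (2*k+2)
  rw [show 2*k+2 = 2*(k+1) by ring] at he ⊢
  rw [pp_even, pp_odd]
  have e : uu r η (2*(k+1)) z * DD t r η (2*(k+1)) z =
     η (2*(k+1)) * (-(z * uu r η (2*k+1) z - r)) * DD t r η (2*k+1) z / t *
      ((1 - r * (z * uu r η (2*k+1) z)) / (1 - r * (z * uu r η (2*k+1) z))) := by
    rw [show 2*(k+1) = 2*k+1+1 by ring]
    simp only [uu, DD]
    ring
  rw [e, div_self hd]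
  field_simp

lemma Yo_pp {z : ℂ} (hz : ‖z‖ = 1) (k : ℕ) :
    Yo t r (fun n => pp t r η n z) k = z * uu r η (2*k+1) z * pp t r η (2*k+1) z := by
  have ht' : (t:ℂ) ≠ 0 := by exact_mod_cast ht.ne'
  unfold Yo
  simp only
  rw [pp_step ht h0 h1 hrt hη hz]
  field_simp
  ring

lemma Ye_pp {z : ℂ} (hz : ‖z‖ = 1) (k : ℕ) :
    Ye t r (fun n => pp t r η n z) k = - ss η k * (z⁻¹)^k * DD t r η (2*k) z := by
  have ht' : (t:ℂ) ≠ 0 := by exact_mod_cast ht.ne'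
  have hc : (r:ℂ)^2 + (t:ℂ)^2 = 1 := by exact_mod_cast hrt
  cases k with
  | zero =>
    have he := eta_ne ht h0 h1 hrt hη 0
    simp only [Ye]
    rw [show (0:ℕ) = 2 * 0 by rfl, pp_even]
    simp [ss, uu, DD, he]
  | succ k =>
    simp only [Ye]
    rw [pp_step ht h0 h1 hrt hη hz, pp_odd, show 2*(k+1) = 2*k+1+1 by ring]
    conv_rhs => rw [DD]
    field_simp
    linear_combination (-(ss η (k + 1) * z⁻¹ * z⁻¹ ^ k * DD t r η (2 * k + 1) z)) * hc

lemma pp_eig {z : ℂ} (hz : ‖z‖ = 1) (n : ℕ) :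
    z * pp t r η n z = (η n)⁻¹ * rowS t r n (fun n => pp t r η n z) := by
  have ht' : (t:ℂ) ≠ 0 := by exact_mod_cast ht.ne'
  have hz' : z ≠ 0 := by rw [← norm_pos_iff, hz]; norm_num
  have hc : (r:ℂ)^2 + (t:ℂ)^2 = 1 := by exact_mod_cast hrt
  have key : ∀ k, z * uu r η (2*k+1) z * pp t r η (2*k+1) z =
      (- ss η k * (z⁻¹)^k * DD t r η (2*k) z) * (z * uu r η (2*k) z - r) / t := by
    intro k
    have hd := den_ne h0 h1 hη (2*k) hz.le
    have he := eta_ne ht h0 h1 hrt hη (2*k+1)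
    rw [pp_odd]
    have e : uu r η (2*k+1) z * DD t r η (2*k+1) z =
     η (2*k+1) * (-(z * uu r η (2*k) z - r)) * DD t r η (2*k) z / t *
      ((1 - r * (z * uu r η (2*k) z)) / (1 - r * (z * uu r η (2*k) z))) := by
      simp only [uu, DD]
      ring
    rw [div_self hd, mul_one] at e
    calc _ = z * (- ss η (k+1) * (z⁻¹)^(k+1)) * (uu r η (2*k+1) z * DD t r η (2*k+1) z) := by ring
      _ = _ := by
        rw [e, ss, pow_succ]; field_simp
  obtain ⟨k, rfl | rfl⟩ : ∃ k, n = 2*k ∨ n = 2*k+1 := ⟨n/2, by omega⟩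
  · have he := eta_ne ht h0 h1 hrt hη (2*k)
    rw [rowS_even, Ye_pp ht h0 h1 hrt hη hz, Yo_pp ht h0 h1 hrt hη hz, key, pp_even]
    field_simp
    ring
  · have he := eta_ne ht h0 h1 hrt hη (2*k+1)
    rw [rowS_odd, Ye_pp ht h0 h1 hrt hη hz, Yo_pp ht h0 h1 hrt hη hz, key, pp_odd, ss, pow_succ, DD]
    field_simp
    linear_combination (-(ss η k * DD t r η (2 * k) z)) * hc

lemma cont_pp (n : ℕ) : Continuous (fun x : Torus => pp t r η n (ec x)) := by
  unfold pp
  have hi := continuous_ec.inv₀ ec_ne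
  have hD := cont_DD (t := t) h0 h1 hη n
  have hu := cont_circle (dc_uu h0 h1 hη n)
  split_ifs
  · exact (continuous_const.mul (hi.pow _)).mul hD
  · exact (continuous_const.mul (hi.pow _)).mul (hu.mul hD)

lemma pp_norm {z : ℂ} (hz : ‖z‖ = 1) (n : ℕ) : ‖pp t r η n z‖ = ‖DD t r η n z‖ := by
  unfold pp
  split_ifs <;> simp [ss_norm hη, hz, hη, norm_uu_eq h0 h1 hη n hz]

lemma pp_zero_int {n N : ℕ} (hN : n ≤ N) :
    ∫ x : Torus, pp t r η n (ec x) * ww t r η N (ec x) ∂hm = if n = 0 then 1 else 0 := by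
  obtain ⟨k, rfl | rfl⟩ : ∃ k, n = 2*k ∨ n = 2*k+1 := ⟨n/2, by omega⟩
  · rcases Nat.eq_zero_or_pos k with rfl | hk
    · have := ii_all ht h0 h1 hrt hη (le_refl 0) (Nat.zero_le N)
      simp [DD] at this
      have he := eta_ne ht h0 h1 hrt hη 0
      have e : ∀ x, pp t r η (2*0) (ec x) = 1 := fun x => by
        rw [pp_even]; simp [ss, uu, DD, he]
      simp_rw [e]
      simpa using this
    · have := ii_all ht h0 h1 hrt hη (show k ≤ 2*k by omega) hN
      rw [zero_pow hk.ne', zero_mul, map_zero] at this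
      have h2 := congrArg cj this
      rw [map_zero, ← integral_conj] at h2
      have e : ∀ x, pp t r η (2*k) (ec x) * ww t r η N (ec x) = (- ss η k * (η (2*k))⁻¹ * cc η (2*k)) *
        cj ((ec x)⁻¹^k * DD t r η (2*k) (ec x) * ww t r η N (ec x)) := fun x => by
        have hz' := ec_ne x
        rw [pp_even, uD_eq h0 h1 hη _ (norm_ec x), map_mul, map_mul, ww_norm, Complex.conj_ofReal, map_pow, map_inv₀,
          conj_ec, two_mul k, pow_add, inv_inv, inv_pow]
        field_simp
      simp_rw [e]
      rw [integral_const_mul, h2, if_neg (by omega), mul_zero]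
  · have := ii_all ht h0 h1 hrt hη (show k+1 ≤ 2*k+1 by omega) hN
    rw [zero_pow (by omega), zero_mul, map_zero] at this
    rw [if_neg (by omega)]
    simp_rw [pp_odd]
    calc _ = ∫ x : Torus, - ss η (k+1) * ((ec x)⁻¹^(k+1) * DD t r η (2*k+1) (ec x) * ww t r η N (ec x)) ∂hm := by
            congr 1; ext x; ring
      _ = 0 := by rw [integral_const_mul, this, mul_zero]

omit ht h0 h1 hrt hη in
lemma inner_en (n : ℕ) (x : Hn) : inner (𝕜 := ℂ) (en n) x = x n := by
  simp [en, lp.inner_single_left]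

omit ht h0 h1 hrt hη in
lemma op_row (A : Hn →L[ℂ] Hn) (n : ℕ) (x : Hn) :
    HasSum (fun j => x j * inner (𝕜 := ℂ) (en n) (A (en j))) (inner (𝕜 := ℂ) (en n) (A x)) := by
  have h := lp.hasSum_single (p := 2) (by norm_num) x
  have h2 := h.mapL ((innerSL ℂ (en n)).comp A)
  have e : (fun j => x j * inner (𝕜 := ℂ) (en n) (A (en j))) =
      fun j => ((innerSL ℂ) (en n) ∘SL A) (lp.single 2 j (x j)) := by
    ext j
    rw [show lp.single 2 j (x j) = x j • en j by
      rw [en, ← lp.single_smul]; simp, map_smul]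
    simp
  rw [e]
  exact h2

omit ht h0 h1 hrt hη in
lemma op_row' {A : Hn →L[ℂ] Hn} (hA : ∀ k j, inner (𝕜 := ℂ) (en k) (A (en j)) = (η k)⁻¹ * Spent t r k j)
    (n : ℕ) (x : Hn) : inner (𝕜 := ℂ) (en n) (A x) = (η n)⁻¹ * rowS t r n (fun j => x j) := by
  have h := op_row A n x
  rw [rowS, Finset.mul_sum]
  have h2 := hasSum_sum_of_ne_finset_zero (f := (fun j => x j * inner (𝕜 := ℂ) (en n) (A (en j))))
    (s := Finset.range (n+3)) ?_ (L := SummationFilter.unconditional ℕ)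
  · rw [h.unique h2]
    apply Finset.sum_congr rfl
    intro j _
    rw [hA]; ring
  · intro j hj
    rw [Finset.mem_range, not_lt] at hj
    rw [hA, Spent_far t r hj]; simp

lemma U_pow_formula {A : Hn →L[ℂ] Hn} (hA : ∀ k j, inner (𝕜 := ℂ) (en k) (A (en j)) = (η k)⁻¹ * Spent t r k j)
    (T : ℕ) : ∀ n N : ℕ, n + 2*T ≤ N →
      (A^T) (en 0) n = ∫ x : Torus, (ec x)^T * pp t r η n (ec x) * ww t r η N (ec x) ∂hm := by
  induction T with
  | zero =>
    intro n N h
    have := pp_zero_int ht h0 h1 hrt hη (n := n) (N := N) (by omega)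
    simp only [pow_zero, one_mul, this]
    rw [← inner_en]
    by_cases hn : n = 0
    · subst hn; rw [inner_en]; simp [en]
    · rw [inner_en]; simp [en, hn]
  | succ T ih =>
    intro n N h
    rw [pow_succ', ← inner_en, mul_apply_eq_comp, op_row' hA, rowS, Finset.mul_sum]
    have e : ∀ x : Torus, (ec x)^(T+1) * pp t r η n (ec x) * ww t r η N (ec x) =
        ∑ j ∈ Finset.range (n+3), (η n)⁻¹ * (Spent t r n j * ((ec x)^T * pp t r η j (ec x) * ww t r η N (ec x))) := by
      intro x
      have := pp_eig ht h0 h1 hrt hη (norm_ec x) n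
      calc _ = (ec x)^T * (ec x * pp t r η n (ec x)) * ww t r η N (ec x) := by ring
        _ = _ := by
          rw [this, rowS, Finset.mul_sum, Finset.mul_sum, Finset.sum_mul]
          apply Finset.sum_congr rfl
          intro j _
          ring
    simp_rw [e]
    have hi : ∀ j, Integrable (fun x : Torus => (ec x)^T * pp t r η j (ec x) * ww t r η N (ec x)) hm := fun j =>
      int_of_cont (((continuous_ec.pow T).mul (cont_pp ht h0 h1 hrt hη j)).mul (cont_ww ht h0 h1 hη N))
    rw [integral_finsetSum _ (fun j _ => ((hi j).const_mul _).const_mul _)]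
    apply Finset.sum_congr rfl
    intro j hj
    have := Finset.mem_range.1 hj
    rw [integral_const_mul, integral_const_mul, ← ih j N (by omega)]

/-- the main deterministic bound -/
lemma U_pow_le {A : Hn →L[ℂ] Hn} (hA : ∀ k j, inner (𝕜 := ℂ) (en k) (A (en j)) = (η k)⁻¹ * Spent t r k j)
    (T n N : ℕ) (h : n + 2*T ≤ N) :
    ‖(A^T) (en 0) n‖ ≤ ∫ x : Torus, ‖DD t r η n (ec x)‖ * (‖DD t r η N (ec x)‖^2)⁻¹ ∂hm := by
  rw [U_pow_formula ht h0 h1 hrt hη hA T n N h]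
  refine (norm_integral_le_integral_norm _).trans (le_of_eq ?_)
  congr 1
  ext x
  rw [norm_mul, norm_mul, norm_pow, norm_ec, one_pow, one_mul, pp_norm ht h0 h1 hrt hη (norm_ec x), ww_norm,
    Complex.norm_real, Real.norm_of_nonneg (by positivity)]

end



def RR {E : Type*} [NormedAddCommGroup E] [NormedSpace ℝ E] (ν : Measure Torus) (lam : Torus) (f : Torus → E) (x : Torus) : E :=
  ∫ y, f (lam + y + x) ∂ν

lemma cont_RR {E : Type*} [NormedAddCommGroup E] [NormedSpace ℝ E] (ν : Measure Torus) [IsProbabilityMeasure ν]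
    (lam : Torus) {f : Torus → E} (hf : Continuous f) : Continuous (RR ν lam f) := by
  have := continuous_parametric_integral_of_continuous (μ := ν) (f := fun x y => f (lam + y + x))
    (by simp only [Function.uncurry_def]; fun_prop) (isCompact_univ)
  simp only [Measure.restrict_univ] at this
  exact this

lemma parseval {f : Torus → ℂ} (hf : Continuous f) :
    HasSum (fun m : ℤ => ‖fourierCoeff f m‖^2) (∫ x, ‖f x‖^2 ∂hm) := by
  have hL : MemLp f 2 hm := hf.memLp_of_hasCompactSupport (HasCompactSupport.of_compactSpace _)
  have h := hasSum_sq_fourierCoeff (T := 2 * Real.pi) hL.toLp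
  rw [fourierCoeff_congr_ae hL.coeFn_toLp] at h
  convert h using 1
  apply integral_congr_ae
  filter_upwards [hL.coeFn_toLp] with x hx
  simp [hx]

lemma fourier_RR (ν : Measure Torus) [IsProbabilityMeasure ν]
    (lam : Torus) {f : Torus → ℂ} (hf : Continuous f) (m : ℤ) :
    fourierCoeff (RR ν lam f) m = (∫ y, ec (m • (lam + y)) ∂ν) * fourierCoeff f m := by
  unfold fourierCoeff RR
  have hfo : ∀ (k : ℤ) (x : Torus), fourier k x = ec (k • x) := fun k x => by rw [fourier_apply]; rfl
  simp only [hfo, smul_eq_mul]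
  have hc : ∀ k : ℤ, Continuous (fun x : Torus => ec (k • x)) := fun k => continuous_ec.comp (continuous_zsmul k)
  calc ∫ x, ec (-m • x) * ∫ y, f (lam + y + x) ∂ν ∂hm
      = ∫ x, ∫ y, ec (-m • x) * f (lam + y + x) ∂ν ∂hm := by
        congr 1; ext x; rw [integral_const_mul]
    _ = ∫ y, ∫ x, ec (-m • x) * f (lam + y + x) ∂hm ∂ν := by
        apply integral_integral_swap_of_hasCompactSupport
        · exact ((hc (-m)).comp continuous_fst).mul (hf.comp (by fun_prop))
        · exact HasCompactSupport.of_compactSpace _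
    _ = ∫ y, ec (m • (lam + y)) * ∫ x, ec (-m • x) * f x ∂hm ∂ν := by
        congr 1; ext y
        rw [← integral_const_mul, ← integral_add_left_eq_self (μ := hm) (fun x => ec (m • (lam + y)) * (ec (-m • x) * f x)) (lam + y)]
        congr 1; ext x
        rw [← mul_assoc, ← ec_add]
        congr 2
        simp only [smul_add, neg_smul]; abel
    _ = _ := by rw [integral_mul_const]

lemma hm_small : ∀ e : ENNReal, e ≠ 0 → ∃ ε > (0:ℝ), hm {x | 1 - (ec x).re < ε} ≤ e := by
  intro e he
  have hmeas : ∀ n : ℕ, MeasurableSet {x : Torus | 1 - (ec x).re < 1 / ((n:ℝ)+1)} := fun n =>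
    (isOpen_lt (continuous_const.sub (Complex.continuous_re.comp continuous_ec)) continuous_const).measurableSet
  have h := tendsto_measure_iInter_atTop (μ := hm) (s := fun n : ℕ => {x : Torus | 1 - (ec x).re < 1 / ((n:ℝ)+1)})
    (fun n => (hmeas n).nullMeasurableSet)
    (by
      intro a b hab x hx
      simp only [Set.mem_ofPred_eq] at hx ⊢
      exact lt_of_lt_of_le hx (Nat.one_div_le_one_div hab)) ⟨0, measure_ne_top _ _⟩
  have h0 : hm (⋂ n : ℕ, {x : Torus | 1 - (ec x).re < 1 / ((n:ℝ)+1)}) = 0 := by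
    have : (⋂ n : ℕ, {x : Torus | 1 - (ec x).re < 1 / ((n:ℝ)+1)}) ⊆ {0} := by
      intro x hx
      simp only [Set.mem_iInter, Set.mem_ofPred_eq] at hx
      have h1 : 1 - (ec x).re ≤ 0 := by
        by_contra hc
        push Not at hc
        obtain ⟨n, hn⟩ := exists_nat_one_div_lt hc
        exact absurd (hx n) (not_lt.2 hn.le)
      have h2 : (ec x).re = 1 := le_antisymm ((Complex.re_le_norm _).trans (norm_ec x).le) (by linarith)
      have h3 : (ec x).im = 0 := by
        have := norm_ec x
        rw [← sq_eq_sq₀ (norm_nonneg _) zero_le_one, ← Complex.normSq_eq_norm_sq, Complex.normSq_apply, h2] at this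
        nlinarith
      have h4 : ec x = ec 0 := by rw [ec_zero]; exact Complex.ext h2 h3
      exact AddCircle.injective_toCircle (by positivity) (Subtype.ext h4)
    refine measure_mono_null this ?_
    have : (volume : Measure Torus) {0} = 0 := by
      rw [← Metric.closedBall_zero, AddCircle.volume_closedBall]; simp
    rw [AddCircle.volume_eq_smul_haarAddCircle] at this
    simp at this
    rcases this with h | h
    · exact absurd h (not_le.2 Real.pi_pos)
    · exact h
  rw [h0] at h
  obtain ⟨n, hn⟩ := (h.eventually (gt_mem_nhds (pos_iff_ne_zero.2 he))).exists
  exact ⟨1/((n:ℝ)+1), by positivity, hn.le⟩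

lemma nu_hat (ν : Measure Torus) [IsProbabilityMeasure ν] (G : Set Torus) (hG : MeasurableSet G) (M : ENNReal) (hM : M ≠ ⊤)
    (hGM : ν.restrict G ≤ M • hm) (hG0 : ν G ≠ 0) :
    ∃ q : ℝ, 0 ≤ q ∧ q < 1 ∧ ∀ (m : ℤ) (_ : m ≠ 0) (lam : Torus), ‖∫ y, ec (m • (lam + y)) ∂ν‖ ≤ q := by
  obtain ⟨ε, hε, hεs⟩ := hm_small (ν G / 2 / (M+1)) (by
    simp [ENNReal.div_eq_zero_iff, hG0, hM])
  have hp : 0 < (ν G).toReal := ENNReal.toReal_pos hG0 (measure_ne_top _ _)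
  set p := (ν G).toReal with hpd
  refine ⟨max 0 (1 - ε * (p/2)), le_max_left _ _, max_lt one_pos (by nlinarith [mul_pos hε hp]), ?_⟩
  intro m hm0 lam
  apply le_max_of_le_right
  set w := ∫ y, ec (m • (lam + y)) ∂ν with hw
  -- choose the phase
  set a : Torus := ((-arg w : ℝ) : Torus) with ha
  have hwn : (ec a * w) = ‖w‖ := by
    rw [ha, ec_coe]
    conv_lhs => rw [← Complex.norm_mul_exp_arg_mul_I w]
    rw [mul_left_comm, ← Complex.exp_add]; simp
  have hcont : Continuous (fun y : Torus => ec (a + m • (lam + y))) :=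
    continuous_ec.comp (by fun_prop)
  have hintc : ∀ {E : Type} [NormedAddCommGroup E] {f : Torus → E}, Continuous f → Integrable f ν := fun hf =>
    hf.integrable_of_hasCompactSupport (HasCompactSupport.of_compactSpace _)
  have h1 : ‖w‖ = ∫ y, (ec (a + m • (lam + y))).re ∂ν := by
    have : ∫ y, ec (a + m • (lam + y)) ∂ν = ‖w‖ := by
      simp_rw [ec_add a]
      rw [integral_const_mul, hwn]
    have h2 := integral_re (𝕜 := ℂ) (hintc hcont)
    simp only [RCLike.re_eq_complex_re] at h2
    rw [h2, this]; simp
  set B : Set Torus := {y | 1 - (ec (a + m • (lam + y))).re < ε} with hB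
  have hBm : MeasurableSet B :=
    (isOpen_lt (continuous_const.sub (Complex.continuous_re.comp hcont)) continuous_const).measurableSet
  have hBhm : hm B ≤ ν G / 2 / (M+1) := by
    refine le_trans (le_of_eq ?_) hεs
    have mp1 : MeasurePreserving (fun y : Torus => m • y) hm hm := Measure.measurePreserving_zsmul hm hm0
    have mp2 : MeasurePreserving (fun y : Torus => (a + m • lam) + y) hm hm := measurePreserving_add_left hm _
    have mp := mp2.comp mp1
    have hms : MeasurableSet {x : Torus | 1 - (ec x).re < ε} :=
      (isOpen_lt (continuous_const.sub (Complex.continuous_re.comp continuous_ec)) continuous_const).measurableSet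
    rw [← mp.measure_preimage hms.nullMeasurableSet]
    congr 1
    ext y
    simp [hB, smul_add, add_assoc]
  have hνB : ν (G ∩ B) ≤ ν G / 2 := by
    have h3 := hGM B
    rw [Measure.restrict_apply hBm, Set.inter_comm] at h3
    refine h3.trans ?_
    simp only [Measure.smul_apply, smul_eq_mul]
    calc M * hm B ≤ (M+1) * (ν G / 2 / (M+1)) := by gcongr; exact le_self_add
      _ ≤ ν G / 2 := ENNReal.mul_div_le
  have hνB' : p / 2 ≤ (ν (G \ B)).toReal := by
    have h4 : ν G = ν (G ∩ B) + ν (G \ B) := (measure_inter_add_sdiff G hBm).symm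
    have h5 := congrArg ENNReal.toReal h4
    rw [ENNReal.toReal_add (measure_ne_top _ _) (measure_ne_top _ _)] at h5
    have h6 := ENNReal.toReal_mono (by simp [ENNReal.div_eq_top]) hνB
    rw [ENNReal.toReal_div] at h6
    simp at h6
    linarith
  have hint : Integrable (fun y => 1 - (ec (a + m • (lam + y))).re) ν := hintc (continuous_const.sub (Complex.continuous_re.comp hcont))
  have h7 : ε * (p/2) ≤ ∫ y, (1 - (ec (a + m • (lam + y))).re) ∂ν := by
    calc ε * (p/2) ≤ ε * (ν (G \ B)).toReal := by gcongr
      _ = ∫ y in G \ B, ε ∂ν := by simp [Measure.real, mul_comm]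
      _ ≤ ∫ y in G \ B, (1 - (ec (a + m • (lam + y))).re) ∂ν := by
        apply setIntegral_mono_on (by simp) hint.integrableOn (hG.diff hBm)
        intro y hy
        exact not_lt.1 hy.2
      _ ≤ _ := setIntegral_le_integral hint (Eventually.of_forall fun y => by
          have := (Complex.re_le_norm _).trans (norm_ec (a + m • (lam + y))).le
          simp only [Pi.zero_apply]; linarith)
  have hre : Integrable (fun y => (ec (a + m • (lam + y))).re) ν := hintc (Complex.continuous_re.comp hcont)
  rw [integral_sub (integrable_const _) hre, ← h1] at h7
  simp at h7
  linarith



lemma RR_ofReal (ν : Measure Torus) (lam : Torus) (f : Torus → ℝ) :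
    RR ν lam (fun x => (f x : ℂ)) = fun x => ((RR ν lam f x : ℝ) : ℂ) := by
  ext x; unfold RR; exact integral_ofReal (𝕜 := ℂ)

lemma fc_zero (f : Torus → ℝ) : fourierCoeff (T := 2 * Real.pi) (fun x => (f x : ℂ)) 0 = ((∫ x, f x ∂hm : ℝ) : ℂ) := by
  unfold fourierCoeff
  simp only [neg_zero, fourier_zero, one_smul]
  exact integral_ofReal (𝕜 := ℂ)

lemma integral_RR (ν : Measure Torus) [IsProbabilityMeasure ν] (lam : Torus) {f : Torus → ℝ} (hf : Continuous f) :
    ∫ x, RR ν lam f x ∂hm = ∫ x, f x ∂hm := by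
  have h := fourier_RR ν lam (Complex.continuous_ofReal.comp hf) 0
  simp only [zero_smul, ec_zero] at h
  have h2 := RR_ofReal ν lam f
  simp only [Function.comp_def] at h
  rw [h2, fc_zero, fc_zero] at h
  simp only [integral_const, probReal_univ, one_smul, one_mul] at h
  exact_mod_cast h

lemma RR_l2 (ν : Measure Torus) [IsProbabilityMeasure ν] {q : ℝ} (hq0 : 0 ≤ q)
    (hq : ∀ (m : ℤ) (_ : m ≠ 0) (lam : Torus), ‖∫ y, ec (m • (lam + y)) ∂ν‖ ≤ q)
    (lam : Torus) {f : Torus → ℝ} (hf : Continuous f) (h0 : ∫ x, f x ∂hm = 0) :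
    ∫ x, (RR ν lam f x)^2 ∂hm ≤ q^2 * ∫ x, (f x)^2 ∂hm := by
  have hF : Continuous (fun x => (f x : ℂ)) := Complex.continuous_ofReal.comp hf
  have p1 := parseval hF
  have p2 := parseval (cont_RR ν lam hF)
  have e1 : ∫ x, ‖(f x : ℂ)‖^2 ∂hm = ∫ x, (f x)^2 ∂hm := by
    congr 1; ext x; simp
  have e2 : ∫ x, ‖RR ν lam (fun x => (f x : ℂ)) x‖^2 ∂hm = ∫ x, (RR ν lam f x)^2 ∂hm := by
    congr 1; ext x; rw [RR_ofReal]; simp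
  rw [e1] at p1
  rw [e2] at p2
  refine hasSum_le ?_ p2 (p1.mul_left (q^2))
  intro m
  rw [fourier_RR ν lam hF, norm_mul, mul_pow]
  by_cases hm0 : m = 0
  · subst hm0; rw [fc_zero, h0]; simp
  · gcongr
    exact hq m hm0 lam

lemma rint {f : Torus → ℝ} (hf : Continuous f) : Integrable f hm := int_of_cont hf

lemma RR_sub (ν : Measure Torus) [IsProbabilityMeasure ν] (lam : Torus) {f : Torus → ℝ} (hf : Continuous f) (a : ℝ) (x : Torus) :
    RR ν lam (fun x => f x - a) x = RR ν lam f x - a := by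
  unfold RR
  have hi : Integrable (fun y => f (lam + y + x)) ν :=
    (show Continuous (fun y => f (lam + y + x)) by fun_prop).integrable_of_hasCompactSupport (HasCompactSupport.of_compactSpace _)
  rw [integral_sub hi (integrable_const _)]
  simp

lemma pyth {f : Torus → ℝ} (hf : Continuous f) {a : ℝ} (ha : ∫ x, f x ∂hm = a) :
    ∫ x, (f x - a)^2 ∂hm = ∫ x, (f x)^2 ∂hm - a^2 := by
  have : ∀ x, (f x - a)^2 = (f x)^2 - 2*a*(f x) + a^2 := fun x => by ring
  simp_rw [this]
  rw [integral_add (rint (by fun_prop)) (integrable_const _), integral_sub (rint (by fun_prop)) (rint (by fun_prop)),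
    integral_const_mul, ha]
  simp; ring

lemma mean_sub {f : Torus → ℝ} (hf : Continuous f) {a : ℝ} (ha : ∫ x, f x ∂hm = a) :
    ∫ x, (f x - a) ∂hm = 0 := by
  rw [integral_sub (rint hf) (integrable_const _), ha]; simp

lemma RR_bound (ν : Measure Torus) [IsProbabilityMeasure ν] {q : ℝ} (hq0 : 0 ≤ q)
    (hq : ∀ (m : ℤ) (_ : m ≠ 0) (lam : Torus), ‖∫ y, ec (m • (lam + y)) ∂ν‖ ≤ q)
    (lam : Torus) {f : Torus → ℝ} (hf : Continuous f) {a : ℝ} (ha : ∫ x, f x ∂hm = a) :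
    ∫ x, (RR ν lam f x)^2 ∂hm - a^2 ≤ q^2 * (∫ x, (f x)^2 ∂hm - a^2) := by
  have h := RR_l2 ν hq0 hq lam (f := fun x => f x - a) (hf.sub continuous_const) (mean_sub hf ha)
  simp only [RR_sub ν lam hf] at h
  rw [pyth hf ha, pyth (cont_RR ν lam hf) (by rw [integral_RR ν lam hf, ha])] at h
  exact h

lemma cauchy {f g : Torus → ℝ} (hf : Continuous f) (hg : Continuous g) :
    (∫ x, f x * g x ∂hm)^2 ≤ (∫ x, (f x)^2 ∂hm) * (∫ x, (g x)^2 ∂hm) := by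
  have h : ∀ s : ℝ, 0 ≤ (∫ x, (g x)^2 ∂hm) * (s * s) + (-2 * ∫ x, f x * g x ∂hm) * s + ∫ x, (f x)^2 ∂hm := by
    intro s
    have : 0 ≤ ∫ x, (f x - s * g x)^2 ∂hm := integral_nonneg fun x => sq_nonneg _
    have e : ∀ x, (f x - s * g x)^2 = (s*s) * (g x)^2 + (-2*s) * (f x * g x) + (f x)^2 := fun x => by ring
    simp_rw [e] at this
    rw [integral_add (rint (by fun_prop)) (rint (by fun_prop)), integral_add (rint (by fun_prop)) (rint (by fun_prop)),
      integral_const_mul, integral_const_mul] at this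
    linarith
  have := discrim_le_zero h
  unfold discrim at this
  nlinarith

def VV (t r : ℝ) (f : Torus → ℝ) (x : Torus) : ℝ := gg t r x * f (beta r x)

section
variable {t r : ℝ} (ht : 0 < t) (h0 : 0 < r) (h1 : r < 1) (hrt : r^2 + t^2 = 1)
include ht h0 h1 hrt

lemma cont_VV {f : Torus → ℝ} (hf : Continuous f) : Continuous (VV t r f) :=
  (continuous_gg h0 h1).mul (hf.comp (continuous_beta h0 h1))

lemma VV_iso {f : Torus → ℝ} (hf : Continuous f) : ∫ x, (VV t r f x)^2 ∂hm = ∫ x, (f x)^2 ∂hm := by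
  rw [← integral_beta (t := t) h0 h1 hrt (fun x => (f x)^2) (hf.pow 2)]
  congr 1; ext x; unfold VV; ring

lemma gg_sq : ∫ x, (gg t r x)^2 ∂hm = 1 := by
  have := VV_iso ht h0 h1 hrt (f := fun _ => 1) continuous_const
  simpa [VV] using this

lemma delta_lt : (∫ x, gg t r x ∂hm)^2 < 1 := by
  have hc := continuous_gg (t := t) h0 h1
  have hnn : 0 ≤ ∫ x, gg t r x ∂hm := integral_nonneg fun x => (gg_pos ht h0 h1 x).le
  have h2 : ∫ x, (1 - gg t r x)^2 ∂hm = 2 - 2 * ∫ x, gg t r x ∂hm := by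
    have e : ∀ x, (1 - gg t r x)^2 = 1 - 2 * gg t r x + (gg t r x)^2 := fun x => by ring
    simp_rw [e]
    rw [integral_add (rint (by fun_prop)) (rint (by fun_prop)), integral_sub (integrable_const _) (rint (by fun_prop)),
      integral_const_mul, gg_sq ht h0 h1 hrt]
    simp; ring
  have h3 : 0 < ∫ x, (1 - gg t r x)^2 ∂hm := by
    refine Continuous.integral_pos_of_hasCompactSupport_nonneg_nonzero (x := 0) (by fun_prop) (HasCompactSupport.of_compactSpace _)
      (fun x => sq_nonneg _) ?_
    apply pow_ne_zero
    intro h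
    have h4 : gg t r 0 = 1 := by linarith
    unfold gg at h4
    rw [ec_zero, mul_one, show (1:ℂ) - r = ((1 - r : ℝ) : ℂ) by push_cast; ring, Complex.norm_real,
      Real.norm_of_nonneg (by linarith), div_eq_one_iff_eq (by linarith)] at h4
    subst h4
    nlinarith
  nlinarith

lemma contraction (ν : Measure Torus) [IsProbabilityMeasure ν] {q : ℝ} (hq0 : 0 ≤ q) (hq1 : q < 1)
    (hq : ∀ (m : ℤ) (_ : m ≠ 0) (lam : Torus), ‖∫ y, ec (m • (lam + y)) ∂ν‖ ≤ q)
    (lam : Torus) {f : Torus → ℝ} (hf : Continuous f) :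
    ∫ x, (RR ν lam (VV t r (RR ν lam f)) x)^2 ∂hm ≤
      (1 - (1-q^2)^2 * (1 - (∫ x, gg t r x ∂hm)^2)) * ∫ x, (f x)^2 ∂hm := by
  set d := ∫ x, gg t r x ∂hm with hd
  have hd1 : d^2 < 1 := delta_lt ht h0 h1 hrt
  set a := ∫ x, f x ∂hm with ha
  set h := RR ν lam f with hh
  have ch : Continuous h := cont_RR ν lam hf
  have ma : ∫ x, h x ∂hm = a := integral_RR ν lam hf
  have i1 := RR_bound ν hq0 hq lam hf ha.symm
  rw [← hh] at i1
  set F := ∫ x, (f x)^2 ∂hm - a^2 with hF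
  have cg := continuous_gg (t := t) h0 h1
  have ch0 : Continuous (fun x => h x - a) := ch.sub continuous_const
  have hH := pyth ch ma
  set H := ∫ x, (h x)^2 ∂hm - a^2 with hHd
  have cVh := cont_VV ht h0 h1 hrt ch
  set b := ∫ x, VV t r h x ∂hm with hb
  have i2 := RR_bound ν hq0 hq lam cVh hb.symm
  rw [VV_iso ht h0 h1 hrt ch] at i2
  have cVh0 := cont_VV ht h0 h1 hrt ch0
  set e := ∫ x, VV t r (fun x => h x - a) x ∂hm with he
  have hbe : b = a * d + e := by
    have : ∀ x, VV t r h x = a * gg t r x + VV t r (fun x => h x - a) x := fun x => by unfold VV; ring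
    rw [hb]; simp_rw [this]
    rw [integral_add (rint (by fun_prop)) (rint cVh0), integral_const_mul]
  have he2 : e^2 ≤ (1 - d^2) * H := by
    have c := cauchy (f := fun x => 1 - d * gg t r x) (by fun_prop) cVh0
    have e1 : ∫ x, (1 - d * gg t r x)^2 ∂hm = 1 - d^2 := by
      have e : ∀ x, (1 - d * gg t r x)^2 = 1 - (2 * d) * gg t r x + d^2 * (gg t r x)^2 := fun x => by ring
      simp_rw [e]
      rw [integral_add (rint (by fun_prop)) (rint (by fun_prop)), integral_sub (integrable_const _) (rint (by fun_prop)),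
        integral_const_mul, integral_const_mul, gg_sq ht h0 h1 hrt]
      simp; ring
    have e2 : ∫ x, (1 - d * gg t r x) * VV t r (fun x => h x - a) x ∂hm = e := by
      have e3 : ∀ x, (1 - d * gg t r x) * VV t r (fun x => h x - a) x =
        VV t r (fun x => h x - a) x - d * ((fun x => h x - a) (beta r x) * gg t r x ^2) := fun x => by unfold VV; ring
      have e4 := integral_beta (t := t) h0 h1 hrt _ ch0
      rw [mean_sub ch ma] at e4
      simp_rw [e3]
      have cb := continuous_beta h0 h1
      rw [integral_sub (rint cVh0) (rint (by fun_prop)), integral_const_mul, e4, mul_zero, sub_zero]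
    rw [e1, e2, VV_iso ht h0 h1 hrt ch0, hH] at c
    exact c
  have hF0 : 0 ≤ F := by rw [hF, ← pyth hf ha.symm]; exact integral_nonneg fun x => sq_nonneg _
  have hq2 : q^2 < 1 := by nlinarith
  have he3 : e^2 ≤ (1 - d^2) * (q^2 * F) := he2.trans (by gcongr)
  have hcross : 2 * (a * d) * e ≤ a^2 * ((1-d^2)*q^2) + d^2 * F := by
    have hA : 0 ≤ a^2 * ((1-d^2)*q^2) := mul_nonneg (sq_nonneg _) (mul_nonneg (by linarith) (sq_nonneg _))
    have hB : 0 ≤ d^2 * F := by positivity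
    apply le_of_abs_le
    apply abs_le_of_sq_le_sq _ (by linarith)
    calc (2 * (a*d) * e)^2 = 4 * (a*d)^2 * e^2 := by ring
      _ ≤ 4 * (a*d)^2 * ((1 - d^2) * (q^2 * F)) := by gcongr
      _ = 4 * (a^2 * ((1-d^2)*q^2)) * (d^2 * F) := by ring
      _ ≤ _ := by nlinarith [sq_nonneg (a^2 * ((1-d^2)*q^2) - d^2 * F)]
  have hb2 : b^2 ≤ (a^2 + F) * (d^2 + (1-d^2)*q^2) := by
    rw [hbe]; nlinarith
  have hH2 : H ≤ F := i1.trans (by nlinarith)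
  have eF : ∫ x, (f x)^2 ∂hm = a^2 + F := by rw [hF]; ring
  have eH : ∫ x, (h x)^2 ∂hm = a^2 + H := by rw [hHd]; ring
  rw [eF]
  rw [eH] at i2
  nlinarith [mul_le_mul_of_nonneg_left hb2 (show 0 ≤ 1 - q^2 by linarith), mul_le_mul_of_nonneg_left hH2 (sq_nonneg q)]

end

/-- iterates -/
def fN (ν : Measure Torus) (t r : ℝ) (lam : Torus) : ℕ → Torus → ℝ
  | 0 => fun _ => 1
  | n+1 => VV t r (RR ν lam (fN ν t r lam n))

lemma fN_decay {t r : ℝ} (ht : 0 < t) (h0 : 0 < r) (h1 : r < 1) (hrt : r^2 + t^2 = 1)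
    (ν : Measure Torus) [IsProbabilityMeasure ν] {q : ℝ} (hq0 : 0 ≤ q) (hq1 : q < 1)
    (hq : ∀ (m : ℤ) (_ : m ≠ 0) (lam : Torus), ‖∫ y, ec (m • (lam + y)) ∂ν‖ ≤ q) :
    ∃ C s : ℝ, 0 < C ∧ 0 < s ∧ s < 1 ∧ ∀ lam n, ∫ x, fN ν t r lam n x ∂hm ≤ C * s^n := by
  set K := max (1/2) (1 - (1-q^2)^2 * (1 - (∫ x, gg t r x ∂hm)^2)) with hK
  have hK0 : 0 < K := lt_of_lt_of_le (by norm_num) (le_max_left _ _)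
  have hK1 : K < 1 := max_lt (by norm_num) (by
    have := delta_lt ht h0 h1 hrt
    have h2 : 0 < 1 - q^2 := by nlinarith
    have := mul_pos (pow_pos h2 2) (sub_pos.2 this)
    linarith)
  have hcont : ∀ lam n, Continuous (fN ν t r lam n) := by
    intro lam n
    induction n with
    | zero => exact continuous_const
    | succ n ih => exact cont_VV ht h0 h1 hrt (cont_RR ν lam ih)
  have hst : ∀ lam n, ∫ x, (fN ν t r lam (n+2) x)^2 ∂hm ≤ K * ∫ x, (fN ν t r lam n x)^2 ∂hm := by
    intro lam n
    simp only [fN]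
    rw [VV_iso ht h0 h1 hrt (cont_RR ν lam (cont_VV ht h0 h1 hrt (cont_RR ν lam (hcont lam n))))]
    refine (contraction ht h0 h1 hrt ν hq0 hq1 hq lam (hcont lam n)).trans ?_
    exact mul_le_mul_of_nonneg_right (le_max_right _ _) (integral_nonneg fun x => sq_nonneg _)
  have ha0 : ∀ lam, ∫ x, (fN ν t r lam 0 x)^2 ∂hm = 1 := by intro lam; simp [fN]
  have ha1 : ∀ lam, ∫ x, (fN ν t r lam 1 x)^2 ∂hm = 1 := by
    intro lam
    simp only [fN]
    rw [VV_iso ht h0 h1 hrt (cont_RR ν lam continuous_const)]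
    simp [RR]
  have hpow : ∀ lam k, ∫ x, (fN ν t r lam (2*k) x)^2 ∂hm ≤ K^k ∧ ∫ x, (fN ν t r lam (2*k+1) x)^2 ∂hm ≤ K^k := by
    intro lam k
    induction k with
    | zero => simp [ha0, ha1]
    | succ k ih =>
      rw [pow_succ']
      exact ⟨(hst lam (2*k)).trans (by gcongr; exact ih.1), (hst lam (2*k+1)).trans (by gcongr; exact ih.2)⟩
  set s := Real.sqrt (Real.sqrt K) with hs
  have hs0 : 0 < s := Real.sqrt_pos.2 (Real.sqrt_pos.2 hK0)
  have hs1 : s < 1 := by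
    rw [hs, Real.sqrt_lt' one_pos, one_pow, Real.sqrt_lt' one_pos, one_pow]; exact hK1
  have hs4 : s^4 = K := by
    rw [show s^4 = (s^2)^2 by ring, hs, Real.sq_sqrt (Real.sqrt_nonneg _), Real.sq_sqrt hK0.le]
  refine ⟨s⁻¹, s, by positivity, hs0, hs1, fun lam n => ?_⟩
  have hcs : (∫ x, fN ν t r lam n x ∂hm)^2 ≤ ∫ x, (fN ν t r lam n x)^2 ∂hm := by
    have := cauchy (f := fun _ => 1) continuous_const (hcont lam n)
    simpa using this
  apply le_of_abs_le
  apply abs_le_of_sq_le_sq _ (by positivity)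
  refine hcs.trans ?_
  obtain ⟨k, rfl | rfl⟩ : ∃ k, n = 2*k ∨ n = 2*k+1 := ⟨n/2, by omega⟩
  · refine (hpow lam k).1.trans ?_
    rw [← hs4, mul_pow, ← pow_mul, ← pow_mul, show 2*k*2 = 4*k by ring]
    exact le_mul_of_one_le_left (by positivity) (one_le_pow₀ ((one_le_inv₀ hs0).2 hs1.le))
  · refine (hpow lam k).2.trans (le_of_eq ?_)
    rw [← hs4, mul_pow, ← pow_mul, ← pow_mul, show (2*k+1)*2 = 4*k+2 by ring, pow_add]
    field_simp



lemma resample {ν : Measure Torus} [IsProbabilityMeasure ν] {ℙ : Measure (ℕ → Torus)} [IsProbabilityMeasure ℙ]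
    (hiid : ∀ (s : Finset ℕ) (A : ℕ → Set Torus), (∀ k, MeasurableSet (A k)) →
      ℙ {ω | ∀ k ∈ s, ω k ∈ A k} = ∏ k ∈ s, ν (A k)) (n : ℕ) {F : (ℕ → Torus) → ENNReal} (hF : Measurable F) :
    ∫⁻ ω, F ω ∂ℙ = ∫⁻ ω, ∫⁻ y, F (Function.update ω n y) ∂ν ∂ℙ := by
  have hup : Measurable (fun p : (ℕ → Torus) × Torus => Function.update p.1 n p.2) := measurable_update'
  have e1 : ℙ = Measure.infinitePi (fun _ : ℕ => ν) := by
    apply Measure.eq_infinitePi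
    intro s A hA
    exact hiid s A hA
  have e2 : (ℙ.prod ν).map (fun p : (ℕ → Torus) × Torus => Function.update p.1 n p.2)
      = Measure.infinitePi (fun _ : ℕ => ν) := by
    apply Measure.eq_infinitePi
    intro s A hA
    rw [Measure.map_apply hup (MeasurableSet.pi s.countable_toSet (fun i _ => hA i))]
    by_cases hn : n ∈ s
    · have : (fun p : (ℕ → Torus) × Torus => Function.update p.1 n p.2) ⁻¹' (Set.pi s A)
          = {ω | ∀ k ∈ s.erase n, ω k ∈ A k} ×ˢ A n := by
        ext p
        simp only [Set.mem_preimage, Set.mem_pi, Set.mem_prod, Set.mem_ofPred_eq, Finset.mem_erase, Finset.mem_coe]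
        constructor
        · intro h
          refine ⟨fun k hk => ?_, ?_⟩
          · have := h k hk.2
            rwa [Function.update_of_ne hk.1] at this
          · have := h n hn
            rwa [Function.update_self] at this
        · rintro ⟨h, h'⟩ k hk
          by_cases hkn : k = n
          · subst hkn; rwa [Function.update_self]
          · rw [Function.update_of_ne hkn]; exact h k ⟨hkn, hk⟩
      rw [this, Measure.prod_prod, hiid _ _ hA, Finset.prod_erase_mul _ _ hn]
    · have : (fun p : (ℕ → Torus) × Torus => Function.update p.1 n p.2) ⁻¹' (Set.pi s A)
          = {ω | ∀ k ∈ s, ω k ∈ A k} ×ˢ Set.univ := by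
        ext p
        simp only [Set.mem_preimage, Set.mem_pi, Set.mem_prod, Set.mem_ofPred_eq, Finset.mem_coe, Set.mem_univ, and_true]
        refine forall₂_congr fun k hk => ?_
        rw [Function.update_of_ne (by rintro rfl; exact hn hk)]
      rw [this, Measure.prod_prod, hiid _ _ hA, measure_univ, mul_one]
  have e3 := e1.trans e2.symm
  calc ∫⁻ ω, F ω ∂ℙ = ∫⁻ ω, F ω ∂((ℙ.prod ν).map (fun p : (ℕ → Torus) × Torus => Function.update p.1 n p.2)) := by
        rw [← e3]
    _ = ∫⁻ p, F (Function.update p.1 n p.2) ∂(ℙ.prod ν) := lintegral_map hF hup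
    _ = _ := lintegral_prod _ (hF.comp hup).aemeasurable

def XX (r : ℝ) (lam : Torus) (ω : ℕ → Torus) : ℕ → Torus
  | 0 => lam + ω 0 + ((Real.pi : ℝ) : Torus)
  | n+1 => lam + ω (n+1) + beta r (XX r lam ω n)

def CN (r : ℝ) (lam : Torus) (ω : ℕ → Torus) : ℕ → Torus
  | 0 => ((Real.pi : ℝ) : Torus)
  | n+1 => beta r (XX r lam ω n)

lemma XX_eq (r : ℝ) (lam : Torus) (ω : ℕ → Torus) (n : ℕ) : XX r lam ω n = lam + ω n + CN r lam ω n := by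
  cases n <;> rfl

lemma XX_update (r : ℝ) (lam : Torus) (ω : ℕ → Torus) (y : Torus) {k m : ℕ} (h : k < m) :
    XX r lam (Function.update ω m y) k = XX r lam ω k := by
  induction k with
  | zero => simp only [XX]; rw [Function.update_of_ne (by omega)]
  | succ k ih => simp only [XX]; rw [Function.update_of_ne (by omega), ih (by omega)]

lemma CN_update (r : ℝ) (lam : Torus) (ω : ℕ → Torus) (y : Torus) {k m : ℕ} (h : k ≤ m) :
    CN r lam (Function.update ω m y) k = CN r lam ω k := by
  cases k with
  | zero => rfl
  | succ k => simp only [CN]; rw [XX_update r lam ω y (by omega)]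

lemma XX_update_self (r : ℝ) (lam : Torus) (ω : ℕ → Torus) (y : Torus) (m : ℕ) :
    XX r lam (Function.update ω m y) m = lam + y + CN r lam ω m := by
  rw [XX_eq, CN_update r lam ω y le_rfl, Function.update_self]

lemma measurable_XX2 {r : ℝ} (h0 : 0 < r) (h1 : r < 1) (n : ℕ) :
    Measurable (fun p : Torus × (ℕ → Torus) => XX r p.1 p.2 n) := by
  induction n with
  | zero => simp only [XX]; fun_prop
  | succ n ih =>
    simp only [XX]
    have := (continuous_beta h0 h1).measurable.comp ih
    simp only [Function.comp_def] at this
    fun_prop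

lemma measurable_XX {r : ℝ} (h0 : 0 < r) (h1 : r < 1) (lam : Torus) (n : ℕ) :
    Measurable (fun ω : ℕ → Torus => XX r lam ω n) :=
  (measurable_XX2 h0 h1 n).comp (measurable_const.prodMk measurable_id)

lemma uu_XX {r : ℝ} (h0 : 0 < r) (h1 : r < 1) (lam : Torus) (ω : ℕ → Torus) (n : ℕ) :
    ec lam * uu r (fun k => ec (ω k)) n (ec lam) = ec (XX r lam ω n) := by
  induction n with
  | zero => simp only [XX, uu, ec_add, ec_pi]; ring
  | succ n ih =>
    simp only [XX, uu, ec_add, ec_beta h0 h1, ih]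
    ring

lemma DD_XX {t r : ℝ} (ht : 0 < t) (h0 : 0 < r) (h1 : r < 1) (lam : Torus) (ω : ℕ → Torus) (n : ℕ) :
    ‖DD t r (fun k => ec (ω k)) n (ec lam)‖ = (∏ k ∈ Finset.range n, gg t r (XX r lam ω k))⁻¹ := by
  induction n with
  | zero => simp [DD]
  | succ n ih =>
    rw [Finset.prod_range_succ, mul_inv, ← ih]
    simp only [DD, norm_mul, norm_div, uu_XX h0 h1, gg, inv_div, Complex.norm_real, Real.norm_of_nonneg ht.le]

def HH (t r : ℝ) (n N : ℕ) (ω : ℕ → Torus) (lam : Torus) : ENNReal :=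
  ENNReal.ofReal (‖DD t r (fun k => ec (ω k)) n (ec lam)‖ * (‖DD t r (fun k => ec (ω k)) N (ec lam)‖^2)⁻¹)

lemma HH_eq {t r : ℝ} (ht : 0 < t) (h0 : 0 < r) (h1 : r < 1) (lam : Torus) (ω : ℕ → Torus) (n j : ℕ) :
    HH t r n (n+j) ω lam = (∏ k ∈ Finset.range n, ENNReal.ofReal (gg t r (XX r lam ω k))) *
      ∏ k ∈ Finset.range j, ENNReal.ofReal (gg t r (XX r lam ω (n+k))^2) := by
  unfold HH
  rw [DD_XX ht h0 h1, DD_XX ht h0 h1, Finset.prod_range_add]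
  rw [← ENNReal.ofReal_prod_of_nonneg (fun _ _ => (gg_pos ht h0 h1 _).le),
    ← ENNReal.ofReal_prod_of_nonneg (fun _ _ => by positivity), ← ENNReal.ofReal_mul
      (Finset.prod_nonneg fun _ _ => (gg_pos ht h0 h1 _).le), Finset.prod_pow]
  congr 1
  have : (∏ k ∈ Finset.range n, gg t r (XX r lam ω k)) ≠ 0 :=
    Finset.prod_ne_zero_iff.2 fun _ _ => (gg_pos ht h0 h1 _).ne'
  generalize (∏ k ∈ Finset.range n, gg t r (XX r lam ω k)) = a at *
  field_simp

/-- one-step operator -/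
def QQ (ν : Measure Torus) (r : ℝ) (lam : Torus) (p f : Torus → ENNReal) (x : Torus) : ENNReal :=
  p x * ∫⁻ y, f (lam + y + beta r x) ∂ν

lemma measurable_QQ {ν : Measure Torus} [IsProbabilityMeasure ν] {r : ℝ} (h0 : 0 < r) (h1 : r < 1) (lam : Torus)
    {p f : Torus → ENNReal} (hp : Measurable p) (hf : Measurable f) : Measurable (QQ ν r lam p f) := by
  unfold QQ
  refine hp.mul ?_
  have hb := (continuous_beta h0 h1).measurable
  have : Measurable (fun q : Torus × Torus => f (lam + q.2 + beta r q.1)) :=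
    hf.comp ((measurable_const.add measurable_snd).add (hb.comp measurable_fst))
  exact this.lintegral_prod_right'

lemma measurable_QQ_iter {ν : Measure Torus} [IsProbabilityMeasure ν] {r : ℝ} (h0 : 0 < r) (h1 : r < 1) (lam : Torus)
    {p f : Torus → ENNReal} (hp : Measurable p) (hf : Measurable f) (j : ℕ) : Measurable ((QQ ν r lam p)^[j] f) := by
  induction j with
  | zero => exact hf
  | succ j ih => rw [Function.iterate_succ_apply']; exact measurable_QQ h0 h1 lam hp ih

lemma chain {ν : Measure Torus} [IsProbabilityMeasure ν] {ℙ : Measure (ℕ → Torus)} [IsProbabilityMeasure ℙ]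
    (hiid : ∀ (s : Finset ℕ) (A : ℕ → Set Torus), (∀ k, MeasurableSet (A k)) →
      ℙ {ω | ∀ k ∈ s, ω k ∈ A k} = ∏ k ∈ s, ν (A k)) {r : ℝ} (h0 : 0 < r) (h1 : r < 1) (lam : Torus)
    {p : Torus → ENNReal} (hp : Measurable p) (n : ℕ) {W : (ℕ → Torus) → ENNReal} (hW : Measurable W)
    (hWi : ∀ k > n, ∀ ω y, W (Function.update ω k y) = W ω) (j : ℕ) :
    ∀ {f : Torus → ENNReal}, Measurable f →
    ∫⁻ ω, W ω * (∏ k ∈ Finset.range j, p (XX r lam ω (n+k))) * f (XX r lam ω (n+j)) ∂ℙ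
      = ∫⁻ ω, W ω * ((QQ ν r lam p)^[j] f) (XX r lam ω n) ∂ℙ := by
  induction j with
  | zero => intro f hf; simp
  | succ j ih =>
    intro f hf
    have hX := fun k => measurable_XX h0 h1 lam k
    have hprod : ∀ i, Measurable (fun ω => ∏ k ∈ Finset.range i, p (XX r lam ω (n+k))) := fun i =>
      Finset.measurable_prod _ fun k _ => hp.comp (hX _)
    rw [Function.iterate_succ_apply, ← ih (measurable_QQ h0 h1 lam hp hf)]
    have hmm : Measurable (fun ω => W ω * (∏ k ∈ Finset.range (j+1), p (XX r lam ω (n+k))) * f (XX r lam ω (n+(j+1)))) :=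
      (hW.mul (hprod _)).mul (hf.comp (hX _))
    rw [resample hiid (n+(j+1)) hmm]
    congr 1
    ext ω
    have : ∀ y, W (Function.update ω (n+(j+1)) y) *
        (∏ k ∈ Finset.range (j+1), p (XX r lam (Function.update ω (n+(j+1)) y) (n+k)))
        * f (XX r lam (Function.update ω (n+(j+1)) y) (n+(j+1)))
        = (W ω * ∏ k ∈ Finset.range (j+1), p (XX r lam ω (n+k))) * f (lam + y + beta r (XX r lam ω (n+j))) := by
      intro y
      rw [hWi _ (by omega), XX_update_self]
      congr 2
      refine Finset.prod_congr rfl fun k hk => ?_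
      rw [XX_update _ _ _ _ (by have := Finset.mem_range.1 hk; omega)]
    simp_rw [this]
    rw [lintegral_const_mul _ (by fun_prop), Finset.prod_range_succ]
    unfold QQ
    ring

lemma lint_trans {f : Torus → ENNReal} (hf : Measurable f) (a b : Torus) : ∫⁻ y, f (a + y + b) ∂hm = ∫⁻ y, f y ∂hm := by
  have : ∀ y, f (a + y + b) = f ((a + b) + y) := fun y => by congr 1; abel
  simp_rw [this]
  exact lintegral_add_left_eq_self f _

lemma lintegral_QQ {t r : ℝ} (ht : 0 < t) (h0 : 0 < r) (h1 : r < 1) (hrt : r^2 + t^2 = 1)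
    {ν : Measure Torus} [IsProbabilityMeasure ν] (lam : Torus) {f : Torus → ENNReal} (hf : Measurable f) :
    ∫⁻ x, QQ ν r lam (fun x => ENNReal.ofReal (gg t r x ^ 2)) f x ∂hm = ∫⁻ x, f x ∂hm := by
  unfold QQ
  have hm2 : Measurable (fun q : Torus × Torus => f (lam + q.2 + q.1)) := by fun_prop
  rw [lintegral_beta ht h0 h1 hrt (fun z => ∫⁻ y, f (lam + y + z) ∂ν) hm2.lintegral_prod_right']
  rw [lintegral_lintegral_swap hm2.aemeasurable]
  have : ∀ y, ∫⁻ x, f (lam + y + x) ∂hm = ∫⁻ x, f x ∂hm := fun y => lintegral_add_left_eq_self f _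
  simp [this]

lemma lintegral_QQ_iter {t r : ℝ} (ht : 0 < t) (h0 : 0 < r) (h1 : r < 1) (hrt : r^2 + t^2 = 1)
    {ν : Measure Torus} [IsProbabilityMeasure ν] (lam : Torus) (j : ℕ) :
    ∫⁻ x, ((QQ ν r lam (fun x => ENNReal.ofReal (gg t r x ^ 2)))^[j] (fun _ => 1)) x ∂hm = 1 := by
  have hg : Measurable (fun x => ENNReal.ofReal (gg t r x ^ 2)) :=
    ((continuous_gg h0 h1).pow 2).measurable.ennreal_ofReal
  induction j with
  | zero => simp
  | succ j ih =>
    rw [Function.iterate_succ_apply', lintegral_QQ ht h0 h1 hrt lam (measurable_QQ_iter h0 h1 lam hg measurable_const j), ih]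

lemma QQ_fN {t r : ℝ} (ht : 0 < t) (h0 : 0 < r) (h1 : r < 1) (hrt : r^2 + t^2 = 1)
    {ν : Measure Torus} [IsProbabilityMeasure ν] (lam : Torus) (j : ℕ) :
    (Continuous (fN ν t r lam j) ∧ ∀ x, 0 ≤ fN ν t r lam j x) ∧
    (QQ ν r lam (fun x => ENNReal.ofReal (gg t r x)))^[j] (fun _ => 1) = fun x => ENNReal.ofReal (fN ν t r lam j x) := by
  induction j with
  | zero => refine ⟨⟨?_, ?_⟩, ?_⟩ <;> simp [fN]; exact continuous_const
  | succ j ih =>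
    obtain ⟨⟨hc, hp⟩, he⟩ := ih
    have hR : ∀ x, 0 ≤ RR ν lam (fN ν t r lam j) x := fun x => integral_nonneg fun y => hp _
    refine ⟨⟨?_, ?_⟩, ?_⟩
    · exact cont_VV ht h0 h1 hrt (cont_RR ν lam hc)
    · intro x
      exact mul_nonneg (gg_pos ht h0 h1 x).le (hR _)
    · rw [Function.iterate_succ_apply', he]
      ext x
      simp only [QQ, fN, VV, RR]
      rw [ENNReal.ofReal_mul (gg_pos ht h0 h1 x).le]
      congr 1
      rw [ofReal_integral_eq_lintegral_ofReal]
      · exact (show Continuous (fun y => fN ν t r lam j (lam + y + beta r x)) by fun_prop).integrable_of_hasCompactSupport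
          (HasCompactSupport.of_compactSpace _)
      · exact Eventually.of_forall fun y => hp _



def IG (G : Set Torus) (x : Torus) : ENNReal := G.indicator (fun _ => 1) x

lemma measurable_IG {G : Set Torus} (hG : MeasurableSet G) : Measurable (IG G) :=
  measurable_const.indicator hG

lemma lint_IG {ν : Measure Torus} {G : Set Torus} (hG : MeasurableSet G) {M : ENNReal}
    (hGM : ν.restrict G ≤ M • hm) {F : Torus → ENNReal} (hF : Measurable F) (a b : Torus) :
    ∫⁻ y, IG G y * F (a + y + b) ∂ν ≤ M * ∫⁻ y, F y ∂hm := by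
  have : ∀ y, IG G y * F (a + y + b) = G.indicator (fun y => F (a + y + b)) y := by
    intro y; unfold IG
    by_cases hy : y ∈ G <;> simp [hy]
  simp_rw [this]
  rw [lintegral_indicator hG]
  refine (lintegral_mono' hGM le_rfl).trans ?_
  rw [lintegral_smul_measure, lint_trans hF]
  rfl

lemma Ebound {t r : ℝ} (ht : 0 < t) (h0 : 0 < r) (h1 : r < 1) (hrt : r^2 + t^2 = 1)
    {ν : Measure Torus} [IsProbabilityMeasure ν] {ℙ : Measure (ℕ → Torus)} [IsProbabilityMeasure ℙ]
    (hiid : ∀ (s : Finset ℕ) (A : ℕ → Set Torus), (∀ k, MeasurableSet (A k)) →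
      ℙ {ω | ∀ k ∈ s, ω k ∈ A k} = ∏ k ∈ s, ν (A k))
    {G : Set Torus} (hG : MeasurableSet G) {M : ENNReal}
    (hGM : ν.restrict G ≤ M • hm) (lam : Torus) (m d j : ℕ) (hd : 0 < d) :
    ∫⁻ ω, IG G (ω m) * IG G (ω (m+d)) * HH t r (m+d) (m+d+j) ω lam ∂ℙ ≤
      M * M * ENNReal.ofReal (t/(1-r))^m * ENNReal.ofReal (∫ x, fN ν t r lam d x ∂hm) := by
  have hI := measurable_IG hG
  have hX := fun k => measurable_XX h0 h1 lam k
  have hg := measurable_ofReal_gg (t := t) h0 h1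
  have hg2 : Measurable (fun x => ENNReal.ofReal (gg t r x ^ 2)) :=
    ((continuous_gg h0 h1).pow 2).measurable.ennreal_ofReal
  have hprod : ∀ i, Measurable (fun ω => ∏ k ∈ Finset.range i, ENNReal.ofReal (gg t r (XX r lam ω k))) := fun i =>
      Finset.measurable_prod _ fun k _ => hg.comp (hX _)
  set F2 := (QQ ν r lam (fun x => ENNReal.ofReal (gg t r x ^ 2)))^[j] (fun _ => 1) with hF2
  have mF2 : Measurable F2 := measurable_QQ_iter h0 h1 lam hg2 measurable_const j
  set F1 := (QQ ν r lam (fun x => ENNReal.ofReal (gg t r x)))^[d] (fun _ => 1) with hF1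
  have mF1 : Measurable F1 := measurable_QQ_iter h0 h1 lam hg measurable_const d
  have iF2 : ∫⁻ x, F2 x ∂hm = 1 := lintegral_QQ_iter ht h0 h1 hrt lam j
  have iF1 : ∫⁻ x, F1 x ∂hm = ENNReal.ofReal (∫ x, fN ν t r lam d x ∂hm) := by
    obtain ⟨⟨hc, hp⟩, he⟩ := QQ_fN ht h0 h1 hrt (ν := ν) lam d
    rw [hF1, he, ofReal_integral_eq_lintegral_ofReal (rint hc) (Eventually.of_forall hp)]
  have hmW : Measurable (fun ω : ℕ → Torus => IG G (ω m) * IG G (ω (m+d)) *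
      ∏ k ∈ Finset.range (m+d), ENNReal.ofReal (gg t r (XX r lam ω k))) := by
    have := hprod (m+d)
    fun_prop
  have s1 : ∫⁻ ω, IG G (ω m) * IG G (ω (m+d)) * HH t r (m+d) (m+d+j) ω lam ∂ℙ
      = ∫⁻ ω, (IG G (ω m) * IG G (ω (m+d)) * ∏ k ∈ Finset.range (m+d), ENNReal.ofReal (gg t r (XX r lam ω k))) *
          F2 (XX r lam ω (m+d)) ∂ℙ := by
    rw [hF2, ← chain hiid h0 h1 lam hg2 (m+d) hmW _ j measurable_const]
    · congr 1
      ext ω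
      rw [HH_eq ht h0 h1]; ring
    · intro k hk ω y
      rw [Function.update_of_ne (by omega), Function.update_of_ne (by omega)]
      congr 1
      refine Finset.prod_congr rfl fun i hi => ?_
      rw [XX_update _ _ _ _ (by have := Finset.mem_range.1 hi; omega)]
  have s2 : ∫⁻ ω, (IG G (ω m) * IG G (ω (m+d)) * ∏ k ∈ Finset.range (m+d), ENNReal.ofReal (gg t r (XX r lam ω k))) *
          F2 (XX r lam ω (m+d)) ∂ℙ
      ≤ ∫⁻ ω, M * (IG G (ω m) * ∏ k ∈ Finset.range (m+d), ENNReal.ofReal (gg t r (XX r lam ω k))) ∂ℙ := by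
    have hmm : Measurable (fun ω : ℕ → Torus => (IG G (ω m) * IG G (ω (m+d)) *
      ∏ k ∈ Finset.range (m+d), ENNReal.ofReal (gg t r (XX r lam ω k))) * F2 (XX r lam ω (m+d))) :=
      hmW.mul (mF2.comp (hX _))
    rw [resample hiid (m+d) hmm]
    refine lintegral_mono fun ω => ?_
    have : ∀ y, (IG G ((Function.update ω (m+d) y) m) * IG G ((Function.update ω (m+d) y) (m+d)) *
      ∏ k ∈ Finset.range (m+d), ENNReal.ofReal (gg t r (XX r lam (Function.update ω (m+d) y) k))) *
         F2 (XX r lam (Function.update ω (m+d) y) (m+d)) =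
      (IG G (ω m) * ∏ k ∈ Finset.range (m+d), ENNReal.ofReal (gg t r (XX r lam ω k))) *
        (IG G y * F2 (lam + y + CN r lam ω (m+d))) := by
      intro y
      rw [Function.update_of_ne (by omega), Function.update_self, XX_update_self]
      rw [Finset.prod_congr rfl (fun k hk => by
        rw [XX_update r lam ω y (by have := Finset.mem_range.1 hk; omega : k < m+d)])]
      ring
    simp_rw [this]
    rw [lintegral_const_mul _ (by fun_prop)]
    calc _ ≤ (IG G (ω m) * ∏ k ∈ Finset.range (m+d), ENNReal.ofReal (gg t r (XX r lam ω k))) * (M * ∫⁻ y, F2 y ∂hm) := by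
          gcongr; exact lint_IG hG hGM mF2 _ _
      _ = _ := by rw [iF2]; ring
  have s3 : ∫⁻ ω, M * (IG G (ω m) * ∏ k ∈ Finset.range (m+d), ENNReal.ofReal (gg t r (XX r lam ω k))) ∂ℙ
      ≤ ∫⁻ ω, M * ENNReal.ofReal (t/(1-r))^m * (IG G (ω m) * F1 (XX r lam ω m)) ∂ℙ := by
    have e1 : ∫⁻ ω, IG G (ω m) * F1 (XX r lam ω m) ∂ℙ = ∫⁻ ω, IG G (ω m) *
        ∏ k ∈ Finset.range d, ENNReal.ofReal (gg t r (XX r lam ω (m+k))) ∂ℙ := by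
      rw [hF1, ← chain hiid h0 h1 lam hg m (by fun_prop) _ d measurable_const]
      · simp
      · intro k hk ω y
        rw [Function.update_of_ne (by omega)]
    have hm1 : Measurable (fun ω : ℕ → Torus => IG G (ω m) * F1 (XX r lam ω m)) :=
      (hI.comp (measurable_pi_apply m)).mul (mF1.comp (hX _))
    rw [lintegral_const_mul (M * ENNReal.ofReal (t/(1-r))^m) hm1, e1,
      ← lintegral_const_mul]
    swap
    · have : Measurable (fun ω => ∏ k ∈ Finset.range d, ENNReal.ofReal (gg t r (XX r lam ω (m+k)))) :=
        Finset.measurable_prod _ fun k _ => hg.comp (hX _)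
      fun_prop
    refine lintegral_mono fun ω => ?_
    rw [Finset.prod_range_add]
    have : ∏ k ∈ Finset.range m, ENNReal.ofReal (gg t r (XX r lam ω k)) ≤ ENNReal.ofReal (t/(1-r))^m := by
      refine (Finset.prod_le_pow_card _ _ (ENNReal.ofReal (t/(1-r))) ?_).trans (by simp)
      intro k _
      exact ENNReal.ofReal_le_ofReal (gg_le ht h0 h1 _)
    calc _ ≤ M * (IG G (ω m) * (ENNReal.ofReal (t/(1-r))^m * ∏ k ∈ Finset.range d, ENNReal.ofReal (gg t r (XX r lam ω (m+k))))) := by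
          gcongr
      _ = _ := by ring
  have s4 : ∫⁻ ω, IG G (ω m) * F1 (XX r lam ω m) ∂ℙ ≤ M * ∫⁻ x, F1 x ∂hm := by
    have hmm : Measurable (fun ω : ℕ → Torus => IG G (ω m) * F1 (XX r lam ω m)) :=
      (hI.comp (measurable_pi_apply m)).mul (mF1.comp (hX _))
    rw [resample hiid m hmm]
    calc _ ≤ ∫⁻ ω, M * ∫⁻ x, F1 x ∂hm ∂ℙ := by
          refine lintegral_mono fun ω => ?_
          simp only [Function.update_self, XX_update_self]
          exact lint_IG hG hGM mF1 _ _
      _ = _ := by simp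
  rw [s1]
  refine s2.trans (s3.trans ?_)
  rw [lintegral_const_mul _ (by have := mF1.comp (hX m); simp only [Function.comp_def] at this; fun_prop)]
  calc _ ≤ M * ENNReal.ofReal (t/(1-r))^m * (M * ∫⁻ x, F1 x ∂hm) := by gcongr
    _ = _ := by rw [iF1]; ring

lemma measurable_HH {t r : ℝ} (ht : 0 < t) (h0 : 0 < r) (h1 : r < 1) (n j : ℕ) :
    Measurable (fun p : Torus × (ℕ → Torus) => HH t r n (n+j) p.2 p.1) := by
  simp_rw [HH_eq ht h0 h1]
  have hg := measurable_ofReal_gg (t := t) h0 h1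
  have hg2 : Measurable (fun x => ENNReal.ofReal (gg t r x ^ 2)) :=
    ((continuous_gg h0 h1).pow 2).measurable.ennreal_ofReal
  exact (Finset.measurable_prod _ fun k _ => hg.comp (measurable_XX2 h0 h1 k)).mul
    (Finset.measurable_prod _ fun k _ => hg2.comp (measurable_XX2 h0 h1 (n+k)))

/-- the limiting bound -/
def LL (t r : ℝ) (n : ℕ) (ω : ℕ → Torus) : ENNReal :=
  liminf (fun j => ∫⁻ lam, HH t r n (n+j) ω lam ∂hm) atTop

lemma measurable_inner_HH {t r : ℝ} (ht : 0 < t) (h0 : 0 < r) (h1 : r < 1) (n j : ℕ) :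
    Measurable (fun ω => ∫⁻ lam, HH t r n (n+j) ω lam ∂hm) :=
  (measurable_HH ht h0 h1 n j).lintegral_prod_left'

lemma measurable_LL {t r : ℝ} (ht : 0 < t) (h0 : 0 < r) (h1 : r < 1) (n : ℕ) : Measurable (LL t r n) :=
  Measurable.liminf fun j => measurable_inner_HH ht h0 h1 n j

lemma LL_bound {t r : ℝ} (ht : 0 < t) (h0 : 0 < r) (h1 : r < 1) (hrt : r^2 + t^2 = 1)
    {ν : Measure Torus} [IsProbabilityMeasure ν] {ℙ : Measure (ℕ → Torus)} [IsProbabilityMeasure ℙ]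
    (hiid : ∀ (s : Finset ℕ) (A : ℕ → Set Torus), (∀ k, MeasurableSet (A k)) →
      ℙ {ω | ∀ k ∈ s, ω k ∈ A k} = ∏ k ∈ s, ν (A k))
    {G : Set Torus} (hG : MeasurableSet G) {M : ENNReal}
    (hGM : ν.restrict G ≤ M • hm) {C s : ℝ} (hdec : ∀ lam n, ∫ x, fN ν t r lam n x ∂hm ≤ C * s^n)
    (m d : ℕ) (hd : 0 < d) :
    ∫⁻ ω, IG G (ω m) * IG G (ω (m+d)) * LL t r (m+d) ω ∂ℙ ≤
      M * M * ENNReal.ofReal (t/(1-r))^m * ENNReal.ofReal (C * s^d) := by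
  have hI := measurable_IG hG
  have key : ∀ j, ∫⁻ ω, IG G (ω m) * IG G (ω (m+d)) * ∫⁻ lam, HH t r (m+d) (m+d+j) ω lam ∂hm ∂ℙ ≤
      M * M * ENNReal.ofReal (t/(1-r))^m * ENNReal.ofReal (C * s^d) := by
    intro j
    have hH := measurable_HH ht h0 h1 (m+d) j
    have e : ∀ ω : ℕ → Torus, IG G (ω m) * IG G (ω (m+d)) * ∫⁻ lam, HH t r (m+d) (m+d+j) ω lam ∂hm
        = ∫⁻ lam, IG G (ω m) * IG G (ω (m+d)) * HH t r (m+d) (m+d+j) ω lam ∂hm := by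
      intro ω
      have hm3 : Measurable (fun lam => HH t r (m+d) (m+d+j) ω lam) :=
        Measurable.comp (f := fun lam : Torus => (lam, ω)) hH measurable_prodMk_right
      exact (lintegral_const_mul _ hm3).symm
    have hall : ∀ lam, ∫⁻ ω, IG G (ω m) * IG G (ω (m+d)) * HH t r (m+d) (m+d+j) ω lam ∂ℙ ≤
        M * M * ENNReal.ofReal (t/(1-r))^m * ENNReal.ofReal (C * s^d) := by
      intro lam
      refine (Ebound ht h0 h1 hrt hiid hG hGM lam m d j hd).trans ?_
      exact mul_le_mul_right (ENNReal.ofReal_le_ofReal (hdec lam d)) _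
    rw [lintegral_congr e]
    rw [lintegral_lintegral_swap]
    · calc _ ≤ ∫⁻ lam, M * M * ENNReal.ofReal (t/(1-r))^m * ENNReal.ofReal (C * s^d) ∂hm := by
            refine lintegral_mono fun lam => ?_
            exact hall lam
        _ = _ := by simp
    · have h2 : Measurable (fun p : (ℕ → Torus) × Torus => HH t r (m+d) (m+d+j) p.1 p.2) :=
        Measurable.comp (f := fun p : (ℕ → Torus) × Torus => (p.2, p.1)) hH (measurable_snd.prodMk measurable_fst)
      have : Measurable (fun p : (ℕ → Torus) × Torus => IG G (p.1 m) * IG G (p.1 (m+d)) * HH t r (m+d) (m+d+j) p.1 p.2) := by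
        fun_prop
      exact this.aemeasurable
  have e2 : ∀ ω : ℕ → Torus, IG G (ω m) * IG G (ω (m+d)) * LL t r (m+d) ω =
      liminf (fun j => IG G (ω m) * IG G (ω (m+d)) * ∫⁻ lam, HH t r (m+d) (m+d+j) ω lam ∂hm) atTop := by
    intro ω
    unfold LL IG
    by_cases a : ω m ∈ G <;> by_cases b : ω (m+d) ∈ G <;> simp [a, b]
  simp_rw [e2]
  have hmeas : ∀ j, Measurable (fun ω : ℕ → Torus => IG G (ω m) * IG G (ω (m+d)) * ∫⁻ lam, HH t r (m+d) (m+d+j) ω lam ∂hm) := by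
    intro j
    have := measurable_inner_HH ht h0 h1 (m+d) j
    fun_prop
  refine (lintegral_liminf_le hmeas).trans ?_
  exact liminf_le_of_frequently_le' (Frequently.of_forall key)

/-- comparison of neighbouring sites -/
lemma LL_step {t r : ℝ} (ht : 0 < t) (h0 : 0 < r) (h1 : r < 1) (n j : ℕ) (ω : ℕ → Torus) :
    LL t r (n+j) ω ≤ ENNReal.ofReal (((1+r)/t)^j) * LL t r n ω := by
  have hb : 0 ≤ (1+r)/t := by positivity
  have hD : ∀ lam i, ‖DD t r (fun k => ec (ω k)) (n+i) (ec lam)‖ ≤ ((1+r)/t)^i * ‖DD t r (fun k => ec (ω k)) n (ec lam)‖ := by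
    intro lam i
    induction i with
    | zero => simp
    | succ i ih =>
      rw [← add_assoc, DD_XX ht h0 h1, Finset.prod_range_succ, mul_inv, ← DD_XX ht h0 h1]
      have h3 : (gg t r (XX r lam ω (n+i)))⁻¹ ≤ (1+r)/t := by
        rw [← inv_div]
        exact inv_anti₀ (by positivity) (gg_ge ht h0 h1 _)
      calc _ ≤ (((1+r)/t)^i * ‖DD t r (fun k => ec (ω k)) n (ec lam)‖) * ((1+r)/t) := by
            have := inv_nonneg.2 (gg_pos ht h0 h1 (XX r lam ω (n+i))).le
            gcongr
        _ = _ := by ring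
  have hs : LL t r n ω = liminf (fun i => ∫⁻ lam, HH t r n (n+j+i) ω lam ∂hm) atTop := by
    unfold LL
    rw [← liminf_nat_add (fun i => ∫⁻ lam, HH t r n (n+i) ω lam ∂hm) j]
    congr 1; ext i; rw [show n + (i+j) = n+j+i by ring]
  rw [hs]
  unfold LL
  rw [← ENNReal.liminf_const_mul_of_ne_top (by simp)]
  refine liminf_le_liminf (Eventually.of_forall fun i => ?_)
  calc _ ≤ ∫⁻ lam, ENNReal.ofReal (((1+r)/t)^j) * HH t r n (n+j+i) ω lam ∂hm := by
        refine lintegral_mono fun lam => ?_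
        unfold HH
        rw [← ENNReal.ofReal_mul (by positivity), ← mul_assoc]
        gcongr
        exact hD lam j
    _ = _ := lintegral_const_mul' _ _ (by simp)

lemma U_pow_LL {t r : ℝ} (ht : 0 < t) (h0 : 0 < r) (h1 : r < 1) (hrt : r^2 + t^2 = 1) (ω : ℕ → Torus)
    {A : Hn →L[ℂ] Hn} (hA : ∀ k j, inner (𝕜 := ℂ) (en k) (A (en j)) = ec (-(ω k)) * Spent t r k j)
    (T n : ℕ) : ENNReal.ofReal ‖(A^T) (en 0) n‖ ≤ LL t r n ω := by
  unfold LL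
  have hη : ∀ k, ‖ec (ω k)‖ = 1 := fun k => norm_ec _
  refine le_liminf_of_le (by isBoundedDefault) ?_
  filter_upwards [eventually_ge_atTop (2*T)] with j hj
  have := U_pow_le ht h0 h1 hrt hη (A := A) (by intro k j; rw [hA, ec_neg]) T n (n+j) (by omega)
  refine (ENNReal.ofReal_le_ofReal this).trans (le_of_eq ?_)
  unfold HH
  rw [ofReal_integral_eq_lintegral_ofReal]
  · refine int_of_cont ?_
    refine (cont_DD h0 h1 hη n).norm.mul (((cont_DD h0 h1 hη (n+j)).norm.pow 2).inv₀ fun x => ?_)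
    have := DD_ne ht h0 h1 hη (n+j) (z := ec x) (norm_ec x).le
    exact pow_ne_zero _ (norm_ne_zero_iff.2 this)
  · exact Eventually.of_forall fun x => by positivity



lemma exists_G (ν : Measure Torus) [IsProbabilityMeasure ν]
    (hac : (volume : Measure Torus).withDensity (ν.rnDeriv volume) ≠ 0) :
    ∃ (G : Set Torus) (M : ENNReal), MeasurableSet G ∧ M ≠ ⊤ ∧ ν.restrict G ≤ M • hm ∧ ν G ≠ 0 := by
  obtain ⟨S, hS, hS1, hS2⟩ := Measure.mutuallySingular_singularPart ν (volume : Measure Torus)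
  set f := ν.rnDeriv volume with hf
  have mf : Measurable f := Measure.measurable_rnDeriv _ _
  have hdec : ν = ν.singularPart volume + (volume : Measure Torus).withDensity f :=
    Measure.haveLebesgueDecomposition_add ν volume
  have hmeas : ∀ n : ℕ, MeasurableSet (S ∩ {x | f x ≤ n}) := fun n => hS.inter (measurableSet_le mf measurable_const)
  have h2pi : (volume : Measure Torus) = ENNReal.ofReal (2*Real.pi) • hm := AddCircle.volume_eq_smul_haarAddCircle
  by_contra hcon
  push Not at hcon
  have hz : ∀ n : ℕ, ν (S ∩ {x | f x ≤ n}) = 0 := by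
    intro n
    refine hcon _ (n * ENNReal.ofReal (2*Real.pi)) (hmeas n) (ENNReal.mul_ne_top (by simp) ENNReal.ofReal_ne_top) ?_
    refine Measure.le_iff.2 fun A hA => ?_
    rw [Measure.restrict_apply hA]
    conv_lhs => rw [hdec]
    rw [Measure.add_apply]
    have z1 : ν.singularPart volume (A ∩ (S ∩ {x | f x ≤ n})) = 0 :=
      measure_mono_null (fun x hx => hx.2.1) hS1
    rw [z1, zero_add, withDensity_apply _ (hA.inter (hmeas n))]
    calc _ ≤ ∫⁻ x in (A ∩ (S ∩ {x | f x ≤ n})), (n : ENNReal) ∂volume :=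
          setLIntegral_mono measurable_const fun x hx => hx.2.2
      _ = n * volume (A ∩ (S ∩ {x | f x ≤ n})) := by rw [setLIntegral_const]
      _ ≤ n * volume A := by gcongr; exact Set.inter_subset_left
      _ = _ := by
        rw [h2pi]
        simp only [Measure.smul_apply, smul_eq_mul]
        ring
  have hz2 : ν (⋃ n : ℕ, (S ∩ {x | f x ≤ n})) = 0 := measure_iUnion_null hz
  apply hac
  rw [← Measure.measure_univ_eq_zero]
  have hle : (volume : Measure Torus).withDensity f ≤ ν := by
    conv_rhs => rw [hdec]
    exact Measure.le_add_left le_rfl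
  have hfin : (volume : Measure Torus).withDensity f {x | f x = ⊤} = 0 := by
    apply withDensity_absolutelyContinuous
    have := Measure.rnDeriv_lt_top ν (volume : Measure Torus)
    have h2 := ae_iff.1 this
    simpa [not_lt, top_le_iff] using h2
  have hSc : (volume : Measure Torus).withDensity f Sᶜ = 0 := withDensity_absolutelyContinuous _ _ hS2
  have hU : (volume : Measure Torus).withDensity f (⋃ n : ℕ, (S ∩ {x | f x ≤ n})) = 0 :=
    le_antisymm ((hle _).trans hz2.le) zero_le
  refine measure_mono_null (t := ((⋃ n : ℕ, (S ∩ {x | f x ≤ n})) ∪ Sᶜ) ∪ {x | f x = ⊤}) ?_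
    (measure_union_null (measure_union_null hU hSc) hfin)
  intro x _
  by_cases hx : x ∈ S
  · by_cases hx2 : f x = ⊤
    · right; exact hx2
    · left; left
      obtain ⟨n, hn⟩ := ENNReal.exists_nat_gt hx2
      exact Set.mem_iUnion.2 ⟨n, hx, hn.le⟩
  · left; right; exact hx

lemma LL_ae {t r : ℝ} (ht : 0 < t) (h0 : 0 < r) (h1 : r < 1) (hrt : r^2 + t^2 = 1)
    {ν : Measure Torus} [IsProbabilityMeasure ν] {ℙ : Measure (ℕ → Torus)} [IsProbabilityMeasure ℙ]
    (hiid : ∀ (s : Finset ℕ) (A : ℕ → Set Torus), (∀ k, MeasurableSet (A k)) →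
      ℙ {ω | ∀ k ∈ s, ω k ∈ A k} = ∏ k ∈ s, ν (A k))
    {G : Set Torus} (hG : MeasurableSet G) {M : ENNReal} (hM : M ≠ ⊤)
    (hGM : ν.restrict G ≤ M • hm) {C s : ℝ} (hC : 0 < C) (hs : 0 < s) (hs1 : s < 1)
    (hdec : ∀ lam n, ∫ x, fN ν t r lam n x ∂hm ≤ C * s^n) :
    ∀ᵐ ω ∂ℙ, ∀ m, ω m ∈ G → ∃ K : ℝ, 0 < K ∧ ∀ d, ω (m+(d+1)) ∈ G → LL t r (m+(d+1)) ω ≤ ENNReal.ofReal (K * (Real.sqrt s)^(m+(d+1))) := by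
  rw [ae_all_iff]
  intro m
  have hI := measurable_IG hG
  set σ := Real.sqrt s with hσ
  have hσ0 : 0 < σ := Real.sqrt_pos.2 hs
  have hσs : σ * σ = s := Real.mul_self_sqrt hs.le
  have hσ1 : σ < 1 := by nlinarith
  set S : (ℕ → Torus) → ENNReal := fun ω => ∑' d : ℕ, ENNReal.ofReal ((σ⁻¹)^(d+1)) *
    (IG G (ω m) * IG G (ω (m+(d+1))) * LL t r (m+(d+1)) ω) with hS
  have hme : ∀ d : ℕ, Measurable (fun ω : ℕ → Torus => IG G (ω m) * IG G (ω (m+(d+1))) * LL t r (m+(d+1)) ω) := by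
    intro d
    have := measurable_LL ht h0 h1 (m+(d+1))
    fun_prop
  have hSm : Measurable S := Measurable.tsum fun d => (hme d).const_mul _
  set B := M * M * ENNReal.ofReal (t/(1-r))^m with hB
  have hBt : B ≠ ⊤ := ENNReal.mul_ne_top (ENNReal.mul_ne_top hM hM) (by simp)
  have hSi : ∫⁻ ω, S ω ∂ℙ ≠ ⊤ := by
    rw [hS, lintegral_tsum fun d => ((hme d).const_mul _).aemeasurable]
    refine ne_top_of_le_ne_top (b := ∑' d : ℕ, B * ENNReal.ofReal (C * σ * σ^d)) ?_ ?_
    · rw [ENNReal.tsum_mul_left]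
      refine ENNReal.mul_ne_top hBt ?_
      have : Summable (fun d : ℕ => C * σ * σ^d) := (summable_geometric_of_lt_one hσ0.le hσ1).mul_left _
      exact this.tsum_ofReal_ne_top
    · refine ENNReal.tsum_le_tsum fun d => ?_
      rw [lintegral_const_mul _ (hme d)]
      calc _ ≤ ENNReal.ofReal ((σ⁻¹)^(d+1)) * (B * ENNReal.ofReal (C * s^(d+1))) := by
            exact mul_le_mul_right (LL_bound ht h0 h1 hrt hiid hG hGM hdec m (d+1) (by omega)) _
        _ = B * (ENNReal.ofReal ((σ⁻¹)^(d+1)) * ENNReal.ofReal (C * s^(d+1))) := by ring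
        _ ≤ _ := by
          rw [← ENNReal.ofReal_mul (by positivity)]
          refine mul_le_mul_right (ENNReal.ofReal_le_ofReal (le_of_eq ?_)) _
          rw [← hσs, inv_pow, mul_pow]
          field_simp
          ring
  filter_upwards [ae_lt_top hSm hSi] with ω hω hm0
  refine ⟨((S ω).toReal + 1) * (σ⁻¹)^m, by positivity, fun d hd => ?_⟩
  have h2 : ENNReal.ofReal ((σ⁻¹)^(d+1)) * (IG G (ω m) * IG G (ω (m+(d+1))) * LL t r (m+(d+1)) ω) ≤ S ω :=
    ENNReal.le_tsum d
  have e1 : IG G (ω m) = 1 := by simp [IG, hm0]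
  have e2 : IG G (ω (m+(d+1))) = 1 := by simp [IG, hd]
  rw [e1, e2, one_mul, one_mul] at h2
  calc LL t r (m+(d+1)) ω = ENNReal.ofReal (σ^(d+1)) * (ENNReal.ofReal ((σ⁻¹)^(d+1)) * LL t r (m+(d+1)) ω) := by
        rw [← mul_assoc, ← ENNReal.ofReal_mul (by positivity), ← mul_pow, mul_inv_cancel₀ hσ0.ne', one_pow, ENNReal.ofReal_one, one_mul]
    _ ≤ ENNReal.ofReal (σ^(d+1)) * ENNReal.ofReal ((S ω).toReal + 1) := by
        refine mul_le_mul_right (h2.trans ?_) _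
        rw [← ENNReal.ofReal_toReal hω.ne]
        exact ENNReal.ofReal_le_ofReal (by rw [ENNReal.ofReal_toReal hω.ne]; linarith)
    _ = _ := by
        rw [← ENNReal.ofReal_mul (by positivity)]
        congr 1
        rw [pow_add σ m, inv_pow]
        field_simp

lemma LL_exp {t r : ℝ} (ht : 0 < t) (h0 : 0 < r) (h1 : r < 1) (hrt : r^2 + t^2 = 1)
    {ν : Measure Torus} [IsProbabilityMeasure ν]
    (hac : (volume : Measure Torus).withDensity (ν.rnDeriv volume) ≠ 0)
    {ℙ : Measure (ℕ → Torus)} [IsProbabilityMeasure ℙ]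
    (hiid : ∀ (s : Finset ℕ) (A : ℕ → Set Torus), (∀ k, MeasurableSet (A k)) →
      ℙ {ω | ∀ k ∈ s, ω k ∈ A k} = ∏ k ∈ s, ν (A k)) :
    ∀ᵐ ω ∂ℙ, ∃ C ρ : ℝ, 0 < C ∧ 0 < ρ ∧ ρ < 1 ∧ ∀ᶠ n in atTop, LL t r n ω ≤ ENNReal.ofReal (C * ρ^n) := by
  obtain ⟨G, M, hG, hM, hGM, hG0⟩ := exists_G ν hac
  obtain ⟨q, hq0, hq1, hq⟩ := nu_hat ν G hG M hM hGM hG0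
  obtain ⟨C, s, hC, hs, hs1, hdec⟩ := fN_decay ht h0 h1 hrt ν hq0 hq1 hq
  have hA := LL_ae ht h0 h1 hrt hiid hG hM hGM hC hs hs1 hdec
  set σ := Real.sqrt s with hσ
  have hσ0 : 0 < σ := Real.sqrt_pos.2 hs
  have hσs : σ * σ = s := Real.mul_self_sqrt hs.le
  have hσ1 : σ < 1 := by nlinarith
  set b := (1+r)/t with hb
  have hb0 : 0 < b := by positivity
  have hb1 : 1 ≤ b := by
    rw [hb, le_div_iff₀ ht]; nlinarith
  obtain ⟨d, hd⟩ := exists_pow_lt_of_lt_one (show 0 < b⁻¹ by positivity) hσ1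
  set τ := b * σ^d with hτ
  have hτ0 : 0 < τ := by positivity
  have hτ1 : τ < 1 := by
    rw [hτ]
    calc b * σ^d < b * b⁻¹ := by gcongr
      _ = 1 := mul_inv_cancel₀ hb0.ne'
  set ρ := τ ^ ((1:ℝ)/(d+1)) with hρ
  have hρ0 : 0 < ρ := by positivity
  have hρ1 : ρ < 1 := Real.rpow_lt_one hτ0.le hτ1 (by positivity)
  have hρτ : ρ^(d+1) = τ := by
    rw [hρ, ← Real.rpow_natCast, ← Real.rpow_mul hτ0.le]
    push_cast
    rw [one_div, inv_mul_cancel₀ (by positivity), Real.rpow_one]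
  -- Borel-Cantelli
  have hGc : ν Gᶜ < 1 := by
    rw [prob_compl_eq_one_sub hG]
    exact ENNReal.sub_lt_self (by simp) (by simp) hG0
  have hBC : ∑' k : ℕ, ℙ {ω | ∀ i ∈ Finset.Ico (d*k) (d*k+k), ω i ∈ Gᶜ} ≠ ⊤ := by
    have : ∀ k : ℕ, ℙ {ω | ∀ i ∈ Finset.Ico (d*k) (d*k+k), ω i ∈ Gᶜ} = (ν Gᶜ)^k := by
      intro k
      rw [hiid _ (fun _ => Gᶜ) (fun _ => hG.compl), Finset.prod_const, Nat.card_Ico]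
      congr 1; omega
    simp_rw [this]
    rw [ENNReal.tsum_geometric]
    simp only [ne_eq, ENNReal.inv_eq_top]
    exact (tsub_pos_of_lt hGc).ne'
  have hBC2 := ae_eventually_notMem hBC
  filter_upwards [hA, hBC2] with ω hω1 hω2
  obtain ⟨k0, hk0⟩ := eventually_atTop.1 hω2
  have hex : ∀ k ≥ k0, ∃ i, d*k ≤ i ∧ i < d*k+k ∧ ω i ∈ G := by
    intro k hk
    have := hk0 k hk
    simp only [Set.mem_ofPred_eq, Finset.mem_Ico, Set.mem_compl_iff, not_forall, not_not] at this
    obtain ⟨i, ⟨hi1, hi2⟩, hi⟩ := this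
    exact ⟨i, hi1, hi2, hi⟩
  obtain ⟨m, _, _, hmG⟩ := hex k0 le_rfl
  obtain ⟨K, hK, hKb⟩ := hω1 m hmG
  by_cases hd0 : d = 0
  · exfalso
    subst hd0
    simp at hd
    have : b⁻¹ ≤ 1 := inv_le_one_of_one_le₀ hb1
    linarith
  refine ⟨K * b^d * τ⁻¹, ρ, by positivity, hρ0, hρ1, ?_⟩
  filter_upwards [eventually_ge_atTop ((d+1)*(k0+m+1))] with n hn
  set k := n / (d+1) with hk
  have hkk : k0+m+1 ≤ k := (Nat.le_div_iff_mul_le (by omega)).2 (by rw [mul_comm]; exact hn)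
  have hn1 : (d+1)*k ≤ n := Nat.mul_div_le _ _
  have hn2 : n < (d+1)*(k+1) := by
    have := Nat.lt_mul_div_succ n (show 0 < d+1 by omega)
    simpa [hk] using this
  obtain ⟨i, hi1, hi2, hiG⟩ := hex k (by omega)
  have hdk : k ≤ d*k := Nat.le_mul_of_pos_left _ (by omega)
  have hmi : m < i := by omega
  have hin : i ≤ n := by nlinarith
  obtain ⟨e, he⟩ : ∃ e, i = m+(e+1) := ⟨i-m-1, by omega⟩
  have hLi : LL t r i ω ≤ ENNReal.ofReal (K * σ^i) := by
    have := hKb e (by rw [← he]; exact hiG)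
    rwa [← he] at this
  obtain ⟨f, hf⟩ : ∃ f, n = i + f := ⟨n-i, by omega⟩
  have hfk : f ≤ k + d := by nlinarith
  calc LL t r n ω ≤ ENNReal.ofReal (b^f) * LL t r i ω := by rw [hf]; exact LL_step ht h0 h1 i f ω
    _ ≤ ENNReal.ofReal (b^f) * ENNReal.ofReal (K * σ^i) := mul_le_mul_right hLi _
    _ = ENNReal.ofReal (b^f * (K * σ^i)) := by rw [← ENNReal.ofReal_mul (by positivity)]
    _ ≤ _ := by
      refine ENNReal.ofReal_le_ofReal ?_
      have a1 : b^f ≤ b^(k+d) := pow_le_pow_right₀ hb1 hfk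
      have a2 : σ^i ≤ σ^(d*k) := pow_le_pow_of_le_one hσ0.le hσ1.le hi1
      have a3 : τ^(k+1) ≤ ρ^n := by
        rw [← hρτ, ← pow_mul]
        exact pow_le_pow_of_le_one hρ0.le hρ1.le hn2.le
      calc b^f * (K * σ^i) ≤ b^(k+d) * (K * σ^(d*k)) := by gcongr
        _ = K * b^d * τ^k := by rw [hτ, mul_pow, ← pow_mul, pow_add]; ring
        _ = K * b^d * τ⁻¹ * τ^(k+1) := by rw [pow_succ]; field_simp
        _ ≤ _ := by gcongr



lemma norm_sq_tsum (x : Hn) : ENNReal.ofReal (‖x‖^2) = ∑' n, ENNReal.ofReal (‖x n‖^2) := by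
  have h := lp.hasSum_norm (p := 2) (by norm_num) x
  simp only [ENNReal.toReal_ofNat, Real.rpow_ofNat] at h
  rw [← h.tsum_eq, ENNReal.ofReal_tsum_of_nonneg (fun _ => by positivity) h.summable]

lemma rot_sq {t r : ℝ} (hrt : r^2 + t^2 = 1) (a b : ℂ) :
    ‖(r:ℂ) * a + t * b‖^2 + ‖-(t:ℂ) * a + r * b‖^2 = ‖a‖^2 + ‖b‖^2 := by
  simp only [← Complex.normSq_eq_norm_sq, Complex.normSq_apply]
  simp
  linear_combination (a.re^2+a.im^2+b.re^2+b.im^2) * hrt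

lemma op_isom {t r : ℝ} (hrt : r^2 + t^2 = 1) {η : ℕ → ℂ} (hη : ∀ k, ‖η k‖ = 1)
    {A : Hn →L[ℂ] Hn} (hA : ∀ k j, inner (𝕜 := ℂ) (en k) (A (en j)) = (η k)⁻¹ * Spent t r k j) (x : Hn) :
    ‖A x‖ = ‖x‖ := by
  have hrow : ∀ n, ‖(A x) n‖ = ‖rowS t r n (fun j => x j)‖ := by
    intro n
    rw [← inner_en, op_row' hA, norm_mul, norm_inv, hη, inv_one, one_mul]
  have key : ENNReal.ofReal (‖A x‖^2) = ENNReal.ofReal (‖x‖^2) := by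
    rw [norm_sq_tsum, norm_sq_tsum]
    simp_rw [hrow]
    set X : ℕ → ℂ := fun j => x j with hX
    rw [← tsum_even_add_odd ENNReal.summable ENNReal.summable, ← ENNReal.tsum_add]
    have e1 : ∀ k, ENNReal.ofReal (‖rowS t r (2*k) X‖^2) + ENNReal.ofReal (‖rowS t r (2*k+1) X‖^2)
        = ENNReal.ofReal (‖Ye t r X k‖^2) + ENNReal.ofReal (‖Yo t r X k‖^2) := by
      intro k
      rw [← ENNReal.ofReal_add (by positivity) (by positivity), ← ENNReal.ofReal_add (by positivity) (by positivity),
        rowS_even, rowS_odd, rot_sq hrt]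
    simp_rw [e1]
    have e2 : ∀ k, ENNReal.ofReal (‖Ye t r X (k+1)‖^2) + ENNReal.ofReal (‖Yo t r X k‖^2)
        = ENNReal.ofReal (‖x (2*k+1)‖^2) + ENNReal.ofReal (‖x (2*k+2)‖^2) := by
      intro k
      rw [← ENNReal.ofReal_add (by positivity) (by positivity), ← ENNReal.ofReal_add (by positivity) (by positivity)]
      congr 1
      rw [← rot_sq hrt (x (2*k+1)) (x (2*k+2)), add_comm]
      simp only [Ye, Yo, hX]
      have h1 : ‖(r:ℂ) * x (2*k+1) - t * x (2*k+2)‖^2 + ‖(t:ℂ) * x (2*k+1) + r * x (2*k+2)‖^2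
        = ‖x (2*k+1)‖^2 + ‖x (2*k+2)‖^2 := by
        have := rot_sq (t := -t) (r := r) (by rw [neg_sq]; exact hrt) (x (2*k+1)) (x (2*k+2))
        rw [← this]
        push_cast
        congr 2
        · congr 1; ring
        · congr 1; ring
      rw [h1, rot_sq hrt]
    rw [ENNReal.tsum_add, tsum_eq_zero_add' (f := fun k => ENNReal.ofReal (‖Ye t r X k‖^2)) ENNReal.summable,
      add_assoc, ← ENNReal.tsum_add]
    simp_rw [e2]
    rw [tsum_eq_zero_add' (f := fun k => ENNReal.ofReal (‖x k‖^2)) ENNReal.summable,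
      ← tsum_even_add_odd (f := fun k => ENNReal.ofReal (‖x (k+1)‖^2)) ENNReal.summable ENNReal.summable, ← ENNReal.tsum_add]
    congr 2
    simp [Ye, hX]
  have h2 := (ENNReal.ofReal_eq_ofReal_iff (by positivity) (by positivity)).1 key
  exact (sq_eq_sq₀ (norm_nonneg _) (norm_nonneg _)).1 h2

lemma Spent_col (t r : ℝ) (k n : ℕ) (h : 2*k+2 ≤ n) : Spent t r n (2*k) = 0 := by
  unfold Spent
  rw [if_neg (by omega), if_neg (by omega)]
  split_ifs <;> first | rfl | omega

lemma Spent_col_ne {t r : ℝ} (ht : 0 < t) (h0 : 0 < r) (k : ℕ) : Spent t r (2*k+1) (2*k) ≠ 0 := by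
  unfold Spent
  rw [if_neg (by omega)]
  by_cases hk : k = 0
  · subst hk
    simp [ht.ne']
  · rw [if_neg (by omega), if_neg (by omega), if_neg (by omega), if_pos rfl]
    have : -(r*t) ≠ 0 := by nlinarith [mul_pos h0 ht]
    exact_mod_cast this

lemma cyc {t r : ℝ} (ht : 0 < t) (h0 : 0 < r) {η : ℕ → ℂ} (hη : ∀ k, ‖η k‖ = 1)
    {A : Hn →L[ℂ] Hn} (hA : ∀ k j, inner (𝕜 := ℂ) (en k) (A (en j)) = (η k)⁻¹ * Spent t r k j)
    (N : Set Hn) (hN1 : ∀ x ∈ N, A x ∈ N) (hN2 : ∀ x ∈ N, ContinuousLinearMap.adjoint A x ∈ N)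
    (hN0 : ∀ x ∈ N, x 0 = 0) : ∀ x ∈ N, x = 0 := by
  have hη' : ∀ k, η k ≠ 0 := fun k => by rw [← norm_pos_iff, hη]; norm_num
  have ht' : (t:ℂ) ≠ 0 := by exact_mod_cast ht.ne'
  have key : ∀ k, ∀ x ∈ N, ∀ j ≤ 2*k, x j = 0 := by
    intro k
    induction k with
    | zero => intro x hx j hj; rw [show j = 0 by omega]; exact hN0 x hx
    | succ k ih =>
      intro x hx
      have a1 : x (2*k+1) = 0 := by
        have hz : (ContinuousLinearMap.adjoint A x) (2*k) = 0 := ih _ (hN2 x hx) _ le_rfl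
        rw [← inner_en, ContinuousLinearMap.adjoint_inner_right] at hz
        have hs : A (en (2*k)) = ∑ n ∈ Finset.range (2*k+2), ((η n)⁻¹ * Spent t r n (2*k)) • en n := by
          ext m
          rw [← inner_en, hA, ← inner_en, inner_sum]
          simp_rw [inner_smul_right]
          have : ∀ n, inner (𝕜 := ℂ) (en m) (en n) = if m = n then 1 else 0 := by
            intro n; rw [inner_en]; simp only [en, lp.coeFn_single]
            rw [Pi.single_apply]
          simp_rw [this]
          simp only [mul_ite, mul_one, mul_zero]
          rw [Finset.sum_ite_eq]
          split_ifs with hm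
          · rfl
          · rw [Spent_col t r k m (by simpa using hm), mul_zero]
        rw [hs, sum_inner, Finset.sum_range_succ, Finset.sum_eq_zero, zero_add, inner_smul_left, inner_en] at hz
        · rcases mul_eq_zero.1 hz with h | h
          · exfalso
            have h2 : (η (2*k+1))⁻¹ * Spent t r (2*k+1) (2*k) = 0 := by simpa using h
            exact mul_ne_zero (inv_ne_zero (hη' _)) (Spent_col_ne ht h0 k) h2
          · exact h
        · intro n hn
          rw [inner_smul_left, inner_en, ih x hx n (by have := Finset.mem_range.1 hn; omega), mul_zero]
      have a2 : x (2*k+2) = 0 := by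
        have hz : (A x) (2*k) = 0 := ih _ (hN1 x hx) _ le_rfl
        rw [← inner_en, op_row' hA, rowS_even] at hz
        have hz2 := (mul_eq_zero.1 hz).resolve_left (inv_ne_zero (hη' _))
        have hye : Ye t r (fun j => x j) k = 0 := by
          cases k with
          | zero => simp [Ye, hN0 x hx]
          | succ k => simp only [Ye]; rw [ih x hx (2*k+1) (by omega), ih x hx (2*k+2) (by omega)]; simp
        rw [hye, Yo, a1] at hz2
        simpa [ht'] using hz2
      intro j hj
      rcases Nat.lt_or_ge (2*k) j with h | h
      · rcases (show j = 2*k+1 ∨ j = 2*k+2 by omega) with rfl | rfl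
        · exact a1
        · exact a2
      · exact ih x hx j h
  intro x hx
  ext j
  exact key j x hx j (by omega)



lemma exists_avg_limit {H : Type*} [NormedAddCommGroup H] [NormedSpace ℝ H] [CompleteSpace H] (R : ℕ → H)
    {K : Set H} (hK : IsCompact K) (hR : ∀ n, R n ∈ K) :
    ∃ (B : H) (φ : ℕ → ℕ), StrictMono φ ∧
      Tendsto (fun n => ((φ n + 1 : ℕ) : ℝ)⁻¹ • ∑ i ∈ Finset.range (φ n + 1), R i) atTop (nhds B) := by
  have hc : IsCompact (closure (convexHull ℝ K)) :=
    TotallyBounded.isCompact_of_isClosed hK.totallyBounded.convexHull.closure isClosed_closure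
  have hmem : ∀ n : ℕ, ((n + 1 : ℕ) : ℝ)⁻¹ • ∑ i ∈ Finset.range (n + 1), R i ∈ closure (convexHull ℝ K) := by
    intro n
    apply subset_closure
    rw [Finset.smul_sum]
    refine (convex_convexHull ℝ K).sum_mem (fun _ _ => by positivity) ?_ (fun i _ => subset_convexHull ℝ K (hR i))
    rw [Finset.sum_const, Finset.card_range, nsmul_eq_mul, mul_inv_cancel₀ (by positivity)]
  obtain ⟨B, _, φ, hφ, h⟩ := hc.tendsto_subseq hmem
  exact ⟨B, φ, hφ, h⟩

lemma compact_K (C ρ : ℝ) (hC : 0 < C) (hρ0 : 0 < ρ) (hρ1 : ρ < 1) :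
    ∃ K : Set Hn, IsCompact K ∧ ∀ x : Hn, (∀ n, ‖x n‖ ≤ C * ρ^n) → x ∈ K := by
  have hcs : CompactSpace (Metric.closedBall (0:ℂ) 1) := isCompact_iff_compactSpace.1 (isCompact_closedBall _ _)
  let F : (ℕ → Metric.closedBall (0:ℂ) 1) → Hn := fun a => ∑' n, lp.single 2 n (((C * ρ^n : ℝ) : ℂ) * (a n : ℂ))
  have hsum : Summable (fun n : ℕ => C * ρ^n) := (summable_geometric_of_lt_one hρ0.le hρ1).mul_left _
  have hF : Continuous F := by
    refine continuous_tsum (u := fun n => C * ρ^n) ?_ hsum ?_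
    · intro n
      have h1 : Continuous (fun c : ℂ => lp.single (E := fun _ : ℕ => ℂ) 2 n c) := by
        have : ∀ c : ℂ, lp.single (E := fun _ : ℕ => ℂ) 2 n c = c • en n := by
          intro c; unfold en; rw [← lp.single_smul]; simp
        simp_rw [this]
        fun_prop
      exact h1.comp (continuous_const.mul (continuous_subtype_val.comp (continuous_apply n)))
    · intro n a
      rw [lp.norm_single (by norm_num), norm_mul, Complex.norm_real, Real.norm_of_nonneg (by positivity)]
      have := (a n).2
      rw [mem_closedBall_zero_iff] at this
      exact mul_le_of_le_one_right (by positivity) this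
  refine ⟨Set.range F, isCompact_range hF, fun x hx => ?_⟩
  refine ⟨fun n => ⟨x n / ((C * ρ^n : ℝ) : ℂ), ?_⟩, ?_⟩
  · rw [mem_closedBall_zero_iff, norm_div, Complex.norm_real, Real.norm_of_nonneg (by positivity)]
    exact div_le_one_of_le₀ (hx n) (by positivity)
  · have h := lp.hasSum_single (p := 2) (by norm_num) x
    refine (tsum_congr fun n => ?_).trans h.tsum_eq
    congr 1
    have : ((C * ρ^n : ℝ) : ℂ) ≠ 0 := by
      have : C * ρ^n ≠ 0 := by positivity
      exact_mod_cast this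
    simp only
    rw [mul_div_cancel₀ _ this]

lemma compact_rankOne {H : Type*} [NormedAddCommGroup H] [InnerProductSpace ℂ H] (x y : H) :
    IsCompactOperator (InnerProductSpace.rankOne ℂ x y : H →L[ℂ] H) := by
  have : IsCompactOperator (innerSL ℂ y : H →L[ℂ] ℂ) := isCompactOperator_of_locallyCompactSpace_dom (innerSL ℂ y)
  have h2 := this.clm_comp (ContinuousLinearMap.toSpanSingleton ℂ x)
  have e : ((InnerProductSpace.rankOne ℂ x y : H →L[ℂ] H) : H → H) =
      (ContinuousLinearMap.toSpanSingleton ℂ x) ∘ (innerSL ℂ y : H →L[ℂ] ℂ) := by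
    funext z
    simp
  rw [e]
  exact h2



lemma isom_inner {A : Hn →L[ℂ] Hn} (hi : ∀ x, ‖A x‖ = ‖x‖) (x y : Hn) :
    inner ℂ (A x) (A y) = inner ℂ x y :=
  LinearIsometry.inner_map_map (⟨A.toLinearMap, hi⟩ : Hn →ₗᵢ[ℂ] Hn) x y

lemma isom_adj {A : Hn →L[ℂ] Hn} (hi : ∀ x, ‖A x‖ = ‖x‖) (x : Hn) :
    ContinuousLinearMap.adjoint A (A x) = x := by
  refine ext_inner_left ℂ fun v => ?_
  rw [ContinuousLinearMap.adjoint_inner_right, isom_inner hi]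

lemma isom_eig {A : Hn →L[ℂ] Hn} (hi : ∀ x, ‖A x‖ = ‖x‖) {ψ : Hn} {μ : ℂ} (h0 : ψ ≠ 0) (h : A ψ = μ • ψ) :
    ‖μ‖ = 1 := by
  have h1 := hi ψ
  rw [h, norm_smul] at h1
  have h2 : ‖ψ‖ ≠ 0 := norm_ne_zero_iff.2 h0
  exact mul_right_cancel₀ h2 (by rw [h1, one_mul])

lemma isom_eig_adj {A : Hn →L[ℂ] Hn} (hi : ∀ x, ‖A x‖ = ‖x‖) {ψ : Hn} {μ : ℂ} (hμ : ‖μ‖ = 1) (h : A ψ = μ • ψ) :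
    ContinuousLinearMap.adjoint A ψ = μ⁻¹ • ψ := by
  have hm : μ ≠ 0 := by rw [← norm_pos_iff, hμ]; norm_num
  have h1 := isom_adj hi ψ
  rw [h, map_smul] at h1
  rw [eq_inv_smul_iff₀ hm, h1]

lemma isom_pow {A : Hn →L[ℂ] Hn} (hi : ∀ x, ‖A x‖ = ‖x‖) (n : ℕ) (x : Hn) : ‖(A^n) x‖ = ‖x‖ := by
  induction n with
  | zero => simp
  | succ n ih => rw [pow_succ', mul_apply_eq_comp, hi, ih]

lemma coord_cont (n : ℕ) : Continuous (fun x : Hn => x n) := by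
  have : (fun x : Hn => x n) = fun x => inner ℂ (en n) x := by funext x; rw [inner_en]
  rw [this]; fun_prop

lemma partB {A : Hn →L[ℂ] Hn} (hi : ∀ x, ‖A x‖ = ‖x‖)
    (hc : ∀ N : Set Hn, (∀ x ∈ N, A x ∈ N) → (∀ x ∈ N, ContinuousLinearMap.adjoint A x ∈ N) →
      (∀ x ∈ N, x 0 = 0) → ∀ x ∈ N, x = 0)
    {C ρ : ℝ} (hC : 0 < C) (hρ0 : 0 < ρ)
    (hb : ∀ n T : ℕ, ‖(A^T) (en 0) n‖ ≤ C * ρ^n) (ψ : Hn) (hψ : ψ ≠ 0) (μ : ℂ) (hA : A ψ = μ • ψ) :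
    ∃ D : ℝ, 0 < D ∧ ∀ n : ℕ, ‖ψ n‖ ≤ D * ρ^n := by
  have hμ := isom_eig hi hψ hA
  have hm : μ ≠ 0 := by rw [← norm_pos_iff, hμ]; norm_num
  -- eigenvectors vanishing at the origin vanish
  have hz : ∀ φ : Hn, A φ = μ • φ → φ 0 = 0 → φ = 0 := by
    intro φ h1 h2
    refine hc {x | A x = μ • x ∧ x 0 = 0} ?_ ?_ (fun x hx => hx.2) φ ⟨h1, h2⟩
    · rintro x ⟨hx1, hx2⟩
      refine ⟨by rw [hx1, map_smul, hx1], ?_⟩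
      rw [hx1, lp.coeFn_smul, Pi.smul_apply, hx2, smul_zero]
    · rintro x ⟨hx1, hx2⟩
      rw [isom_eig_adj hi hμ hx1]
      refine ⟨by rw [map_smul, hx1, smul_comm], ?_⟩
      rw [lp.coeFn_smul, Pi.smul_apply, hx2, smul_zero]
  let f : Hn →L[ℂ] Hn := μ⁻¹ • A
  have hf : ‖f‖ ≤ 1 := by
    refine ContinuousLinearMap.opNorm_le_bound _ zero_le_one fun x => ?_
    simp only [f, smul_apply, norm_smul, norm_inv, hμ, hi]
    simp
  have hlim := ContinuousLinearMap.tendsto_birkhoffAverage_orthogonalProjection f hf (en 0)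
  have hmem : ∀ x : Hn, x ∈ ((f : Hn →ₗ[ℂ] Hn).eqLocus ((1 : Hn →L[ℂ] Hn) : Hn →ₗ[ℂ] Hn)) ↔ A x = μ • x := by
    intro x
    rw [LinearMap.mem_eqLocus]
    show μ⁻¹ • A x = x ↔ _
    rw [inv_smul_eq_iff₀ hm]
  set E := ((f : Hn →ₗ[ℂ] Hn).eqLocus ((1 : Hn →L[ℂ] Hn) : Hn →ₗ[ℂ] Hn)) with hE
  set p : Hn := (E.orthogonalProjectionOnto (en 0) : Hn) with hp
  have hpE : A p = μ • p := (hmem p).1 (E.orthogonalProjectionOnto (en 0)).2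
  have hpow : ∀ k : ℕ, (f^[k]) (en 0) = (μ⁻¹)^k • (A^k) (en 0) := by
    intro k
    induction k with
    | zero => simp
    | succ k ih =>
      rw [Function.iterate_succ_apply', ih, pow_succ' A, mul_apply_eq_comp]
      show μ⁻¹ • A ((μ⁻¹)^k • (A^k) (en 0)) = _
      rw [map_smul, smul_smul, pow_succ']
  have hpb : ∀ n, ‖p n‖ ≤ C * ρ^n := by
    intro n
    have h1 : Tendsto (fun N => ‖(birkhoffAverage ℂ f id N (en 0) : Hn) n‖) atTop (nhds ‖p n‖) :=
      (((coord_cont n).norm).tendsto p).comp hlim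
    refine le_of_tendsto h1 (Eventually.of_forall fun N => ?_)
    rw [birkhoffAverage, birkhoffSum, lp.coeFn_smul, Pi.smul_apply, norm_smul, norm_inv, lp.coeFn_sum, Finset.sum_apply]
    have h2 : ‖∑ i ∈ Finset.range N, ((id (f^[i] (en 0)) : Hn) n)‖ ≤ N * (C * ρ^n) := by
      refine (norm_sum_le_of_le (f := fun i => ((id (f^[i] (en 0)) : Hn) n)) _ (n := fun _ => C * ρ^n) fun i _ => ?_).trans ?_
      · simp only [id, hpow]
        rw [lp.coeFn_smul, Pi.smul_apply, norm_smul, norm_pow, norm_inv, hμ]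
        simpa using hb n i
      · simp
    rcases Nat.eq_zero_or_pos N with rfl | hN
    · simp; positivity
    · have hN' : (0:ℝ) < N := by exact_mod_cast hN
      rw [Complex.norm_natCast, inv_mul_le_iff₀ hN']
      exact h2
  have hip : ∀ φ : Hn, A φ = μ • φ → inner ℂ φ p = inner ℂ φ (en 0) := by
    intro φ h
    have := E.starProjection_inner_eq_zero (en 0) φ ((hmem φ).2 h)
    rw [inner_sub_left, sub_eq_zero] at this
    have h2 := congrArg (starRingEnd ℂ) this
    rw [inner_conj_symm, inner_conj_symm] at h2
    rw [h2]; rfl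
  have hψ0 : ψ 0 ≠ 0 := fun h => hψ (hz ψ hA h)
  have hp0 : p 0 ≠ 0 := by
    intro h
    have hpz := hz p hpE h
    have h3 := hip ψ hA
    rw [hpz, inner_zero_right] at h3
    apply hψ0
    rw [← inner_en, ← inner_conj_symm, ← h3, map_zero]
  have hφ : (p 0) • ψ - (ψ 0) • p = 0 := by
    refine hz _ ?_ ?_
    · rw [map_sub, map_smul, map_smul, hA, hpE, smul_sub, smul_comm, smul_comm (ψ 0)]
    · show p 0 * ψ 0 - ψ 0 * p 0 = 0
      ring
  refine ⟨‖ψ 0 / p 0‖ * C, by have := norm_pos_iff.2 (div_ne_zero hψ0 hp0); positivity, fun n => ?_⟩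
  have h4 : ψ n = (ψ 0 / p 0) * p n := by
    have h5 : p 0 * ψ n - ψ 0 * p n = 0 := congrArg (fun x : Hn => x n) hφ
    field_simp
    linear_combination h5
  rw [h4, norm_mul, mul_assoc]
  exact mul_le_mul_of_nonneg_left (hpb n) (norm_nonneg _)



/-- a nonzero compact symmetric operator commuting with `A` whose range avoids eigenvectors is zero -/
lemma comm_zero {A B : Hn →L[ℂ] Hn} (hB : IsCompactOperator B) (hs : (B : Hn →ₗ[ℂ] Hn).IsSymmetric)
    (hcomm : ∀ x, A (B x) = B (A x))
    (hne : ∀ x : Hn, (∃ y, B y = x) → (∃ μ : ℂ, A x = μ • x) → x = 0) : B = 0 := by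
  rw [← ContinuousLinearMap.eq_zero_of_forall_hasEigenvalue_eq_zero hB hs]
  intro β hβ
  by_contra hβ0
  have hfd := ContinuousLinearMap.finite_dimensional_eigenspace hB β hβ0
  set V := Module.End.eigenspace (B : Hn →ₗ[ℂ] Hn) β with hV
  have hnt : Nontrivial V := by
    rw [Submodule.nontrivial_iff_ne_bot]; exact hβ
  have hmap : ∀ x ∈ V, (A : Hn →ₗ[ℂ] Hn) x ∈ V := by
    intro x hx
    rw [hV, Module.End.mem_eigenspace_iff] at hx ⊢
    show B (A x) = β • A x
    rw [← hcomm]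
    have : B x = β • x := hx
    rw [this, map_smul]
  obtain ⟨c, hc⟩ := Module.End.exists_eigenvalue ((A : Hn →ₗ[ℂ] Hn).restrict hmap)
  obtain ⟨v, hv⟩ := hc.exists_hasEigenvector
  have h1 := hv.apply_eq_smul
  apply hv.2
  have h2 : A (v:Hn) = c • (v:Hn) := congrArg Subtype.val h1
  have h3 : B (v:Hn) = β • (v:Hn) := by
    exact Module.End.mem_eigenspace_iff.1 v.2
  refine Subtype.ext (hne v ⟨β⁻¹ • v, ?_⟩ ⟨c, h2⟩)
  rw [map_smul, h3, smul_smul, inv_mul_cancel₀ hβ0, one_smul]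

lemma compact_sum {ι : Type*} (s : Finset ι) (R : ι → Hn →L[ℂ] Hn) (h : ∀ i, IsCompactOperator (R i)) :
    IsCompactOperator (∑ i ∈ s, R i : Hn →L[ℂ] Hn) := by
  classical
  induction s using Finset.induction_on with
  | empty => simpa using isCompactOperator_zero
  | insert a s ha ih =>
    rw [Finset.sum_insert ha]
    exact (h a).add ih

/-- orbit `x` of an isometry inside a compact set, with no eigenvectors in the closed span: averages of
rank one projections have a subsequence tending to zero -/
lemma avg_zero {A : Hn →L[ℂ] Hn} (hi : ∀ x, ‖A x‖ = ‖x‖) (x : ℕ → Hn) (hx : ∀ n, A (x n) = x (n+1))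
    {K : Set Hn} (hK : IsCompact K) (hxK : ∀ n, x n ∈ K) (W : Submodule ℂ Hn) (hW : IsClosed (W : Set Hn))
    (hxW : ∀ n, x n ∈ W) (hne : ∀ y ∈ W, (∃ μ : ℂ, A y = μ • y) → y = 0) :
    ∃ φ : ℕ → ℕ, StrictMono φ ∧
      Tendsto (fun n => ((φ n + 1 : ℕ) : ℝ)⁻¹ • ∑ i ∈ Finset.range (φ n + 1),
        (InnerProductSpace.rankOne ℂ (x i) (x i) : Hn →L[ℂ] Hn)) atTop (nhds 0) := by
  let R : ℕ → Hn →L[ℂ] Hn := fun i => InnerProductSpace.rankOne ℂ (x i) (x i)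
  have hcont : Continuous (fun y : Hn => (InnerProductSpace.rankOne ℂ y y : Hn →L[ℂ] Hn)) := by
    have h1 : Continuous (fun y : Hn => ContinuousLinearMap.toSpanSingleton ℂ y) :=
      (ContinuousLinearMap.toSpanSingletonLIE ℂ Hn).continuous
    have h2 : Continuous (fun y : Hn => (innerSL ℂ y : Hn →L[ℂ] ℂ)) := (innerSL ℂ (E := Hn)).continuous
    exact h1.clm_comp h2
  obtain ⟨B, φ, hφ, hlim⟩ := exists_avg_limit R (hK.image hcont) (fun n => ⟨x n, hxK n, rfl⟩)
  have happ : ∀ y, Tendsto (fun n => ((φ n + 1 : ℕ) : ℝ)⁻¹ • ∑ i ∈ Finset.range (φ n + 1), R i y) atTop (nhds (B y)) := by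
    intro y
    have h := ((ContinuousLinearMap.apply ℂ Hn y).continuous.tendsto B).comp hlim
    refine h.congr fun n => ?_
    simp [R]
  have hRapp : ∀ i y, R i y = inner ℂ (x i) y • x i := fun i y => by simp [R]
  have hB : B = 0 := by
    refine comm_zero (A := A) ?_ ?_ ?_ ?_
    · refine isCompactOperator_of_tendsto hlim (Eventually.of_forall fun n => ?_)
      exact (compact_sum _ R (fun i => compact_rankOne _ _)).smul (((φ n + 1 : ℕ) : ℝ)⁻¹)
    · intro u v
      show inner ℂ (B u) v = inner ℂ u (B v)
      have h1 := (happ u).inner (𝕜 := ℂ) (tendsto_const_nhds (x := v))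
      have h2 := (tendsto_const_nhds (x := u)).inner (𝕜 := ℂ) (happ v)
      refine tendsto_nhds_unique h1 (h2.congr fun n => ?_)
      simp only [hRapp]
      rw [inner_smul_left_eq_smul, inner_smul_right_eq_smul, sum_inner, inner_sum]
      congr 1
      refine Finset.sum_congr rfl fun i _ => ?_
      rw [inner_smul_left, inner_smul_right, inner_conj_symm, mul_comm]
    · intro y
      have h1 := (A.continuous.tendsto _).comp (happ y)
      have h2 := happ (A y)
      have hd : Tendsto (fun n => ((φ n + 1 : ℕ) : ℝ)⁻¹ • (R (φ n + 1) (A y) - R 0 (A y))) atTop (nhds 0) := by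
        have hinv : Tendsto (fun n => ((φ n + 1 : ℕ) : ℝ)⁻¹) atTop (nhds 0) :=
          (tendsto_inv_atTop_nhds_zero_nat (𝕜 := ℝ)).comp ((tendsto_add_atTop_nat 1).comp hφ.tendsto_atTop)
        obtain ⟨c, hc⟩ := (hK.image hcont).isBounded.exists_norm_le
        refine squeeze_zero_norm (a := fun n => ((φ n + 1 : ℕ) : ℝ)⁻¹ * (c * ‖A y‖ + c * ‖A y‖)) (fun n => ?_)
          (by simpa using hinv.mul_const (c * ‖A y‖ + c * ‖A y‖))
        rw [norm_smul, Real.norm_of_nonneg (by positivity)]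
        refine mul_le_mul_of_nonneg_left ?_ (by positivity)
        have hRb : ∀ i, ‖R i (A y)‖ ≤ c * ‖A y‖ := fun i =>
          (R i).le_of_opNorm_le (hc _ ⟨x i, hxK i, rfl⟩) _
        exact (norm_sub_le _ _).trans (add_le_add (hRb _) (hRb _))
      refine tendsto_nhds_unique h1 ?_
      have h3 := h2.add hd
      rw [add_zero] at h3
      refine h3.congr fun n => ?_
      simp only [Function.comp]
      rw [← smul_add, ContinuousLinearMap.map_smul_of_tower, map_sum]
      congr 1
      have e : ∀ i, A (R i y) = R (i+1) (A y) := by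
        intro i
        rw [hRapp, hRapp, map_smul, hx, ← hx i, isom_inner hi]
      simp_rw [e]
      have := Finset.sum_range_sub (fun i => R i (A y)) (φ n + 1)
      rw [← this, ← Finset.sum_add_distrib]
      refine Finset.sum_congr rfl fun i _ => by abel
    · rintro z ⟨y, rfl⟩ hz
      refine hne _ ?_ hz
      refine hW.mem_of_tendsto (happ y) (Eventually.of_forall fun n => ?_)
      have : ∑ i ∈ Finset.range (φ n + 1), R i y ∈ W :=
        W.sum_mem fun i _ => by rw [hRapp]; exact W.smul_mem _ (hxW i)
      exact Submodule.smul_of_tower_mem W _ this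
  subst hB
  exact ⟨φ, hφ, hlim⟩



lemma norm_en (k : ℕ) : ‖en k‖ = 1 := by
  unfold en; rw [lp.norm_single (by norm_num)]; simp

lemma avg_bound (x y : ℕ → Hn) (m : ℝ) (hm0 : 0 ≤ m) (hm : ∀ n, m^2 ≤ ‖inner ℂ (x n) (y n)‖) (hxm : ∀ n, ‖x n‖ ≤ m)
    {C ρ : ℝ} (hC : 0 < C) (hρ0 : 0 < ρ) (hρ1 : ρ < 1) (hy : ∀ n k, ‖y n k‖ ≤ C * ρ^k)
    {δ : ℝ} (hδ : 0 < δ) (N : ℕ) :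
    m^2 ≤ (δ + ‖((N + 1 : ℕ) : ℝ)⁻¹ • ∑ i ∈ Finset.range (N + 1),
        (InnerProductSpace.rankOne ℂ (x i) (x i) : Hn →L[ℂ] Hn)‖ / (4 * δ)) * (C * (1 - ρ)⁻¹) := by
  set B := ((N + 1 : ℕ) : ℝ)⁻¹ • ∑ i ∈ Finset.range (N + 1),
        (InnerProductSpace.rankOne ℂ (x i) (x i) : Hn →L[ℂ] Hn) with hB
  have hN : (0:ℝ) < ((N+1:ℕ):ℝ) := by positivity
  have hw : HasSum (fun k : ℕ => C * ρ^k) (C * (1-ρ)⁻¹) := (hasSum_geometric_of_lt_one hρ0.le hρ1).mul_left C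
  have hxk : ∀ n k, ‖x n k‖ ≤ m := fun n k => (lp.norm_apply_le_norm (by norm_num) (x n) k).trans (hxm n)
  have hs : ∀ n, Summable (fun k : ℕ => C * ρ^k * (δ + ‖x n k‖^2/(4*δ))) := by
    intro n
    refine Summable.of_nonneg_of_le (fun k => by positivity) (fun k => ?_) (hw.summable.mul_right (δ + m^2/(4*δ)))
    have := hxk n k
    gcongr
  have h1 : ∀ n, m^2 ≤ ∑' k : ℕ, C * ρ^k * (δ + ‖x n k‖^2/(4*δ)) := by
    intro n
    refine (hm n).trans ?_
    rw [lp.inner_eq_tsum]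
    refine tsum_of_norm_bounded (hs n).hasSum fun k => ?_
    refine (norm_inner_le_norm _ _).trans ?_
    have e1 : ‖x n k‖ ≤ δ + ‖x n k‖^2/(4*δ) := by
      have : δ + ‖x n k‖^2/(4*δ) - ‖x n k‖ = (2*δ - ‖x n k‖)^2/(4*δ) := by field_simp; ring
      have h2 : 0 ≤ (2*δ - ‖x n k‖)^2/(4*δ) := by positivity
      linarith
    rw [mul_comm (C * ρ^k)]
    exact mul_le_mul e1 (hy n k) (norm_nonneg _) (by positivity)
  have h2 : ((N+1:ℕ):ℝ) * m^2 ≤ ∑ n ∈ Finset.range (N+1), ∑' k : ℕ, C * ρ^k * (δ + ‖x n k‖^2/(4*δ)) := by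
    have := Finset.sum_le_sum (s := Finset.range (N+1)) fun n _ => h1 n
    simpa using this
  rw [← Summable.tsum_finsetSum (fun n _ => hs n)] at h2
  have h3 : ∀ k, ∑ n ∈ Finset.range (N+1), ‖x n k‖^2 ≤ ((N+1:ℕ):ℝ) * ‖B‖ := by
    intro k
    have e : B (en k) k = (((((N+1:ℕ):ℝ)⁻¹ * ∑ n ∈ Finset.range (N+1), ‖x n k‖^2) : ℝ) : ℂ) := by
      rw [← inner_en, hB]
      rw [smul_apply, inner_smul_right_eq_smul, sum_apply, inner_sum]
      rw [Complex.real_smul, Complex.ofReal_mul, Complex.ofReal_sum]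
      congr 1
      refine Finset.sum_congr rfl fun i _ => ?_
      rw [InnerProductSpace.rankOne_apply, inner_smul_right, inner_en, ← inner_conj_symm, inner_en]
      rw [mul_comm, Complex.mul_conj, Complex.normSq_eq_norm_sq]
    have e2 : ‖B (en k) k‖ ≤ ‖B‖ := by
      refine (lp.norm_apply_le_norm (by norm_num) _ k).trans ?_
      simpa [norm_en] using B.le_opNorm (en k)
    rw [e, Complex.norm_real, Real.norm_of_nonneg (by positivity), inv_mul_le_iff₀ hN] at e2
    exact e2
  have h4 : ∑' k : ℕ, ∑ n ∈ Finset.range (N+1), C * ρ^k * (δ + ‖x n k‖^2/(4*δ)) ≤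
      ((N+1:ℕ):ℝ) * ((δ + ‖B‖/(4*δ)) * (C * (1-ρ)⁻¹)) := by
    have hR : HasSum (fun k : ℕ => ((N+1:ℕ):ℝ) * ((δ + ‖B‖/(4*δ)) * (C * ρ^k)))
      (((N+1:ℕ):ℝ) * ((δ + ‖B‖/(4*δ)) * (C * (1-ρ)⁻¹))) := (hw.mul_left _).mul_left _
    rw [← hR.tsum_eq]
    refine Summable.tsum_le_tsum (fun k => ?_) (summable_sum fun n _ => hs n) hR.summable
    rw [← Finset.mul_sum, Finset.sum_add_distrib, ← Finset.sum_div, Finset.sum_const, Finset.card_range, nsmul_eq_mul]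
    have h5 : (∑ n ∈ Finset.range (N+1), ‖x n k‖^2)/(4*δ) ≤ ((N+1:ℕ):ℝ) * ‖B‖ / (4*δ) :=
      div_le_div_of_nonneg_right (h3 k) (by positivity)
    have h6 : 0 < C * ρ^k := by positivity
    calc _ ≤ C * ρ^k * (((N+1:ℕ):ℝ) * δ + ((N+1:ℕ):ℝ) * ‖B‖ / (4*δ)) := by gcongr
      _ = _ := by ring
  exact le_of_mul_le_mul_left (h2.trans h4) hN

lemma partA {A : Hn →L[ℂ] Hn} (hi : ∀ x, ‖A x‖ = ‖x‖)
    (hc : ∀ N : Set Hn, (∀ x ∈ N, A x ∈ N) → (∀ x ∈ N, ContinuousLinearMap.adjoint A x ∈ N) →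
      (∀ x ∈ N, x 0 = 0) → ∀ x ∈ N, x = 0)
    {C ρ : ℝ} (hC : 0 < C) (hρ0 : 0 < ρ) (hρ1 : ρ < 1)
    (hb : ∀ n T : ℕ, ‖(A^T) (en 0) n‖ ≤ C * ρ^n) :
    (Submodule.span ℂ {ψ : Hn | ψ ≠ 0 ∧ ∃ μ : ℂ, A ψ = μ • ψ}).topologicalClosure = ⊤ := by
  rw [Submodule.topologicalClosure_eq_top_iff]
  set S := {ψ : Hn | ψ ≠ 0 ∧ ∃ μ : ℂ, A ψ = μ • ψ} with hS
  set W := (Submodule.span ℂ S)ᗮ with hW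
  have hmem : ∀ w, w ∈ W ↔ ∀ ψ ∈ S, inner ℂ ψ w = 0 := by
    intro w
    rw [hW, Submodule.mem_orthogonal]
    constructor
    · intro h ψ hψ; exact h ψ (Submodule.subset_span hψ)
    · intro h u hu
      induction hu using Submodule.span_induction with
      | mem x hx => exact h x hx
      | zero => exact inner_zero_left _
      | add x y _ _ hx hy => rw [inner_add_left, hx, hy, add_zero]
      | smul a x _ hx => rw [inner_smul_left, hx, mul_zero]
  have hWA : ∀ w ∈ W, A w ∈ W := by
    intro w hw
    rw [hmem] at hw ⊢
    rintro ψ ⟨h0, μ, h⟩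
    rw [← ContinuousLinearMap.adjoint_inner_left, isom_eig_adj hi (isom_eig hi h0 h) h, inner_smul_left,
      hw ψ ⟨h0, μ, h⟩, mul_zero]
  have hWB : ∀ w ∈ W, ContinuousLinearMap.adjoint A w ∈ W := by
    intro w hw
    rw [hmem] at hw ⊢
    rintro ψ ⟨h0, μ, h⟩
    rw [ContinuousLinearMap.adjoint_inner_right, h, inner_smul_left, hw ψ ⟨h0, μ, h⟩, mul_zero]
  have hWc : IsClosed (W : Set Hn) := Submodule.isClosed_orthogonal _
  have hne : ∀ y ∈ W, (∃ μ : ℂ, A y = μ • y) → y = 0 := by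
    intro y hy hμ
    by_contra h0
    have := (hmem y).1 hy y ⟨h0, hμ⟩
    exact h0 (inner_self_eq_zero.1 this)
  have hPA : ∀ x, W.starProjection (A x) = A (W.starProjection x) := by
    intro x
    refine Submodule.eq_starProjection_of_mem_orthogonal (hWA _ (W.starProjection_apply_mem x)) ?_
    rw [← map_sub, Submodule.mem_orthogonal]
    intro w hw
    rw [← ContinuousLinearMap.adjoint_inner_left]
    exact (Submodule.mem_orthogonal _ _).1 (W.sub_starProjection_mem_orthogonal x) _ (hWB w hw)
  let x : ℕ → Hn := fun n => W.starProjection ((A^n) (en 0))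
  have hx : ∀ n, A (x n) = x (n+1) := by
    intro n
    simp only [x]
    rw [← hPA, pow_succ', mul_apply_eq_comp]
  obtain ⟨K, hK, hKm⟩ := compact_K C ρ hC hρ0 hρ1
  obtain ⟨φ, hφ, hlim⟩ := avg_zero hi x hx (hK.image W.starProjection.continuous)
    (fun n => ⟨_, hKm _ (fun k => hb k n), rfl⟩) W hWc (fun n => W.starProjection_apply_mem _) hne
  have hxn : ∀ n, ‖x n‖ = ‖x 0‖ := by
    intro n
    induction n with
    | zero => rfl
    | succ n ih => rw [← hx, hi, ih]
  have hin : ∀ n, ‖x 0‖^2 ≤ ‖inner ℂ (x n) ((A^n) (en 0))‖ := by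
    intro n
    have e : inner ℂ (x n) ((A^n) (en 0)) = inner ℂ (x n) (x n) := by
      simp only [x]
      rw [← Submodule.inner_starProjection_left_eq_right, Submodule.starProjection_eq_self_iff.2 (W.starProjection_apply_mem _)]
    rw [e, inner_self_eq_norm_sq_to_K, ← hxn n]
    simp
  have hb2 : ∀ δ : ℝ, 0 < δ → ‖x 0‖^2 ≤ δ * (C * (1-ρ)⁻¹) := by
    intro δ hδ
    have h1 := fun N => avg_bound x (fun n => (A^n) (en 0)) ‖x 0‖ (norm_nonneg _) hin (fun n => (hxn n).le) hC hρ0 hρ1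
      (fun n k => hb k n) hδ (φ N)
    have h2 := (((hlim.norm.div_const (4*δ)).const_add δ).mul_const (C * (1-ρ)⁻¹))
    rw [norm_zero, zero_div, add_zero] at h2
    exact ge_of_tendsto h2 (Eventually.of_forall h1)
  have hx0 : x 0 = 0 := by
    rw [← norm_eq_zero, ← sq_eq_zero_iff]
    refine le_antisymm ?_ (sq_nonneg _)
    have hD : 0 < C * (1-ρ)⁻¹ := mul_pos hC (inv_pos.2 (by linarith))
    refine le_of_forall_pos_le_add fun ε hε => ?_
    have := hb2 (ε / (C * (1-ρ)⁻¹)) (by positivity)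
    rw [div_mul_cancel₀ _ hD.ne'] at this
    linarith
  rw [Submodule.eq_bot_iff]
  refine hc W hWA hWB ?_
  intro w hw
  have h1 : inner ℂ (x 0) w = inner ℂ (en 0) w := by
    simp only [x, pow_zero]
    rw [Submodule.inner_starProjection_left_eq_right, Submodule.starProjection_eq_self_iff.2 hw]
    rfl
  rw [← inner_en, ← h1, hx0, inner_zero_left]


/-- Localization for the random unitary operators `U⁺_ω = D⁺_ω S⁺` on `ℓ²(ℕ₀)`:
for `ℙ⁺`-a.e. `ω`, `U⁺_ω` has pure point spectrum with exponentially decaying eigenfunctions. -/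
theorem localization_N
    (t r : ℝ) (ht0 : 0 < t) (ht1 : t < 1) (hr0 : 0 < r) (hr1 : r < 1)
    (hrt : r^2 + t^2 = 1)
    (ν : Measure Torus) [IsProbabilityMeasure ν]
    (hac : (volume : Measure Torus).withDensity (ν.rnDeriv volume) ≠ 0)
    (hsupp : (interior (measSupport ν)).Nonempty)
    (ℙ : Measure (ℕ → Torus)) [IsProbabilityMeasure ℙ]
    (hiid : ∀ (s : Finset ℕ) (A : ℕ → Set Torus), (∀ k, MeasurableSet (A k)) →
      ℙ {ω | ∀ k ∈ s, ω k ∈ A k} = ∏ k ∈ s, ν (A k))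
    (U : (ℕ → Torus) → (Hn →L[ℂ] Hn))
    (hU : ∀ (ω : ℕ → Torus) (k j : ℕ),
      inner (𝕜 := ℂ) (en k) (U ω (en j)) = ec (-(ω k)) * Spent t r k j) :
    ∀ᵐ ω ∂ℙ,
      (Submodule.span ℂ {ψ : Hn | ψ ≠ 0 ∧ ∃ μ : ℂ, U ω ψ = μ • ψ}).topologicalClosure = ⊤ ∧
      ∀ ψ : Hn, ψ ≠ 0 → (∃ μ : ℂ, U ω ψ = μ • ψ) →
        ∃ C > (0:ℝ), ∃ lam > (0:ℝ), ∀ k : ℕ,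
          ‖inner (𝕜 := ℂ) (en k) ψ‖ ≤ C * Real.exp (-lam * (k:ℝ)) := by
  have hrt2 := hrt
  filter_upwards [LL_exp ht0 hr0 hr1 hrt hac hiid] with ω hω
  obtain ⟨C, ρ, hC, hρ0, hρ1, hev⟩ := hω
  obtain ⟨N0, hN0⟩ := eventually_atTop.1 hev
  have hη : ∀ k, ‖ec (ω k)‖ = 1 := fun k => by unfold ec; exact Circle.norm_coe _
  have hA : ∀ k j, inner (𝕜 := ℂ) (en k) (U ω (en j)) = (ec (ω k))⁻¹ * Spent t r k j := by
    intro k j; rw [hU, ec_neg]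
  have hi : ∀ x, ‖U ω x‖ = ‖x‖ := op_isom hrt hη hA
  have hc := cyc ht0 hr0 hη hA
  have hb : ∀ n T : ℕ, ‖((U ω)^T) (en 0) n‖ ≤ (C + (ρ^N0)⁻¹) * ρ^n := by
    intro n T
    have hp : 0 < ρ^n := by positivity
    have hq : 0 < ρ^N0 := by positivity
    rcases Nat.lt_or_ge n N0 with h | h
    · have h1 : ‖((U ω)^T) (en 0) n‖ ≤ 1 := by
        refine (lp.norm_apply_le_norm (by norm_num) _ n).trans ?_
        rw [isom_pow hi, norm_en]
      have h2 : ρ^N0 ≤ ρ^n := pow_le_pow_of_le_one hρ0.le hρ1.le h.le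
      have h3 : 1 ≤ (ρ^N0)⁻¹ * ρ^n := by rw [← div_eq_inv_mul, one_le_div hq]; exact h2
      nlinarith [mul_pos hC hp]
    · have h1 := (U_pow_LL ht0 hr0 hr1 hrt ω (hU ω) T n).trans (hN0 n h)
      rw [ENNReal.ofReal_le_ofReal_iff (by positivity)] at h1
      have h3 : 0 < (ρ^N0)⁻¹ * ρ^n := by positivity
      nlinarith
  have hC2 : 0 < C + (ρ^N0)⁻¹ := by positivity
  refine ⟨partA hi hc hC2 hρ0 hρ1 hb, ?_⟩
  rintro ψ hψ ⟨μ, hμ⟩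
  obtain ⟨D, hD, hDb⟩ := partB hi hc hC2 hρ0 hb ψ hψ μ hμ
  refine ⟨D, hD, -Real.log ρ, by have := Real.log_neg hρ0 hρ1; linarith, fun k => ?_⟩
  rw [inner_en, neg_neg, mul_comm (Real.log ρ), Real.exp_nat_mul, Real.exp_log hρ0]
  exact hDb k

end
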